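/- arXiv:2111.08048 — 5 statements merged into one kernel-verified Lean document; each statement's English description precedes it below -/
import Mathlib

section
/- Let E be an integer m×N matrix and let I ⊆ [N] be any set of columns designated integral. Then every element g of the mixed Graver basis G_X(E) satisfies ‖g‖₁ ≤ (2‖E‖∞ (2m‖E‖∞ + 1)^m + 1)^m. -/
/-!
Why the bound holds. Write `D = ‖E‖∞`.

A circuit is conformally minimal among all integral kernel vectors (`circuit_minimal`), so it is
enough to treat a conformally minimal `g` in a mixed kernel with nonzero integral part
(`vnorm1_le_of_minimal`).

View `g` as a nonnegative weighting `|g j|` of the signed columns `sign (g j) * E_j`, whose weighted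
sum is `0`, and merge continuous coordinates with the same signed column. Minimality passes to the
merged weighting `w` (`IsMinimalWeighting`). By minimality no two opposite signed columns (and not
the zero column) carry continuous weight, so at most `H = ((2D+1)^m - 1)/2` weights are fractional,
and the fractional parts add up to at most `H` (`IsMinimalWeighting.sum_fract_le`).

The integer parts of `w` give a multiset of `t` integer vectors with entries at most `D` in absolute
value, whose total is bounded by `D * H`. By the Steinitz lemma (`steinitz_chain`) they can be
ordered so that all initial sums lie in the box of radius `m * D + D * H`. Two equal initial sums
would yield a proper conformal kernel element, so `t ≤ (2 (m D + D H) + 1)^m`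
(`IsMinimalWeighting.sum_floor_le`). Hence `‖g‖₁ ≤ (2 (m D + D H) + 1)^m + H`, which is at most the
claimed bound (`numeric_bound`).
-/

open Matrix BigOperators

/-- The ℓ₁-norm of a real vector. -/
def vnorm1 {ι : Type*} [Fintype ι] (x : ι → ℝ) : ℝ := ∑ i, |x i|

/-- The largest absolute value of an entry of an integer matrix. -/
def matNormInf {R C : Type*} [Fintype R] [Fintype C] (E : Matrix R C ℤ) : ℕ :=
  Finset.univ.sup fun p : R × C => (E p.1 p.2).natAbs

/-- `x` is conformal to `y` : componentwise `|x i| ≤ |y i|` and `x i * y i ≥ 0`. -/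
def ConformalTo {ι : Type*} (x y : ι → ℝ) : Prop :=
  ∀ i, |x i| ≤ |y i| ∧ 0 ≤ x i * y i

/-- The mixed kernel of an integer matrix `E` with integral columns `I`. -/
def MixedKer {R C : Type*} [Fintype C] [DecidableEq C]
    (E : Matrix R C ℤ) (I : Finset C) (x : C → ℝ) : Prop :=
  (E.map (Int.cast : ℤ → ℝ)).mulVec x = 0 ∧ ∀ i ∈ I, ∃ z : ℤ, x i = z

/-- `g` is a circuit of the integer matrix `A` : nonzero, integral, in the kernel,
with coprime entries and inclusion-minimal support among nonzero kernel elements. -/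
def IsCircuit {R C : Type*} [Fintype C] (A : Matrix R C ℤ) (g : C → ℤ) : Prop :=
  g ≠ 0 ∧ A.mulVec g = 0 ∧ (Finset.univ.gcd fun i => (g i).natAbs) = 1 ∧
  ∀ y : C → ℝ, y ≠ 0 → (A.map (Int.cast : ℤ → ℝ)).mulVec y = 0 →
    ¬ (Function.support y ⊂ Function.support fun i => ((g i : ℝ)))

/-- Membership in the mixed Graver basis `G_X(E)` of `E` w.r.t. integral columns `I`. -/
def InMixedGraver {R C : Type*} [Fintype C] [DecidableEq C]
    (E : Matrix R C ℤ) (I : Finset C) (g : C → ℝ) : Prop :=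
  (MixedKer E I g ∧ (∃ i ∈ I, g i ≠ 0) ∧
    ∀ y, MixedKer E I y → y ≠ 0 → y ≠ g → ¬ ConformalTo y g) ∨
  ((∀ i ∈ I, g i = 0) ∧
    ∃ gz : {i : C // i ∉ I} → ℤ, (∀ i : {i : C // i ∉ I}, g i.1 = gz i) ∧
      IsCircuit (E.submatrix id (Subtype.val : {i : C // i ∉ I} → C)) gz)

/-- `x = h + g` is a one-fat decomposition of `x ∈ ker_X(E)` with fat element `h`. -/
def OneFatDecomp {R C : Type*} [Fintype C] [DecidableEq C]
    (E : Matrix R C ℤ) (I : Finset C) (x h g : C → ℝ) : Prop :=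
  x = h + g ∧ ConformalTo h x ∧ ConformalTo g x ∧ MixedKer E I h ∧
  (E.map (Int.cast : ℤ → ℝ)).mulVec g = 0 ∧ (∀ i, ∃ z : ℤ, g i = z)

/-! ### The Steinitz lemma -/

/-- More than `m + 1` vectors of `ℝ^m` have a nontrivial affine dependency: append a coordinate `1`
to each of them and count dimensions. -/
lemma exists_relation {m : ℕ} {ι : Type*} (x : ι → Fin m → ℝ) (s : Finset ι)
    (hs : m + 1 < s.card) :
    ∃ y : ι → ℝ, (∀ i ∉ s, y i = 0) ∧ (∃ i ∈ s, y i ≠ 0) ∧ ∑ i ∈ s, y i = 0 ∧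
      ∀ r, ∑ i ∈ s, y i * x i r = 0 := by
  classical
  let f : (s → ℝ) →ₗ[ℝ] (Option (Fin m) → ℝ) :=
    Matrix.mulVecLin (Matrix.of fun (o : Option (Fin m)) (i : s) => o.elim 1 (x i))
  have hker : LinearMap.ker f ≠ ⊥ := by
    apply LinearMap.ker_ne_bot_of_finrank_lt
    simpa using hs
  obtain ⟨z, hz, hz0⟩ := (Submodule.ne_bot_iff _).1 hker
  obtain ⟨i, hi⟩ := Function.ne_iff.1 hz0
  have hz' : ∀ o : Option (Fin m), ∑ i : s, o.elim 1 (x i) * z i = 0 := by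
    intro o
    have := congrFun (LinearMap.mem_ker.1 hz) o
    simpa [f, Matrix.mulVec, dotProduct] using this
  refine ⟨fun i => if h : i ∈ s then z ⟨i, h⟩ else 0, fun i hi => by simp [hi],
    ⟨i, i.2, by simpa using hi⟩, ?_, fun r => ?_⟩
  · have := hz' none
    rw [← Finset.sum_coe_sort]
    simpa using this
  · have := hz' (some r)
    rw [← Finset.sum_coe_sort]
    simpa [mul_comm] using this

/-- One step towards a vertex of the polytope of all weights `l ∈ [0,1]^ι` with prescribed total
and prescribed weighted sum of the `x i`: moving along an affine dependency of the fractional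
positions until some coordinate reaches `0` or `1` makes one more coordinate integral. -/
lemma exists_fewer_fractional {m : ℕ} {ι : Type*} [Fintype ι] [DecidableEq ι]
    (x : ι → Fin m → ℝ) (l : ι → ℝ) (h0 : ∀ i, 0 ≤ l i) (h1 : ∀ i, l i ≤ 1)
    (hc : m + 1 < (Finset.univ.filter fun i => 0 < l i ∧ l i < 1).card) :
    ∃ l' : ι → ℝ, (∀ i, 0 ≤ l' i) ∧ (∀ i, l' i ≤ 1) ∧ (∀ i, l i = 0 → l' i = 0) ∧
      ∑ i, l' i = ∑ i, l i ∧ (∀ r, ∑ i, l' i * x i r = ∑ i, l i * x i r) ∧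
      (Finset.univ.filter fun i => 0 < l' i ∧ l' i < 1).card <
        (Finset.univ.filter fun i => 0 < l i ∧ l i < 1).card := by
  set s := Finset.univ.filter fun i => 0 < l i ∧ l i < 1 with hs
  obtain ⟨y, hy0, ⟨i₀, hi₀, hyi₀⟩, hysum, hyx⟩ := exists_relation x s hc
  -- `step i` is how far one can move along `y` before coordinate `i` leaves `[0, 1]`.
  let step : ι → ℝ := fun i => if 0 < y i then (1 - l i) / y i else l i / (- y i)
  obtain ⟨i₁, hi₁, hmin⟩ := Finset.exists_min_image (s.filter fun i => y i ≠ 0) step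
    ⟨i₀, by simp [hi₀, hyi₀]⟩
  have hi₁' : (0 < l i₁ ∧ l i₁ < 1) ∧ y i₁ ≠ 0 := by simpa [hs] using hi₁
  set t := step i₁ with ht
  have htpos : 0 < t := by
    simp only [ht, step]
    split_ifs with h
    · exact div_pos (by linarith) h
    · exact div_pos hi₁'.1.1 (by have := lt_of_le_of_ne (not_lt.1 h) hi₁'.2; linarith)
  have hbd : ∀ i, 0 ≤ l i + t * y i ∧ l i + t * y i ≤ 1 := by
    intro i
    by_cases hi : i ∈ s
    swap
    · simp [hy0 i hi, h0 i, h1 i]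
    rcases lt_trichotomy (y i) 0 with h | h | h
    · have := hmin i (by simp [hi, h.ne])
      simp only [step, if_neg h.not_gt] at this
      rw [le_div_iff₀ (by linarith)] at this
      exact ⟨by linarith, by nlinarith [h1 i]⟩
    · simp [h, h0 i, h1 i]
    · have := hmin i (by simp [hi, h.ne'])
      simp only [step, if_pos h] at this
      rw [le_div_iff₀ h] at this
      exact ⟨by nlinarith [h0 i], by linarith⟩
  have hsum : ∀ f : ι → ℝ, ∑ i, t * y i * f i = t * ∑ i ∈ s, y i * f i := by
    intro f
    rw [Finset.mul_sum, ← Finset.sum_subset (Finset.subset_univ s)]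
    · exact Finset.sum_congr rfl fun i _ => by ring
    · intro i _ hi
      simp [hy0 i hi]
  refine ⟨fun i => l i + t * y i, fun i => (hbd i).1, fun i => (hbd i).2, ?_, ?_, ?_, ?_⟩
  · intro i hi
    have : i ∉ s := by simp [hs, hi]
    simp [hi, hy0 i this]
  · have := hsum (fun _ => 1)
    simp only [mul_one, hysum, mul_zero] at this
    simp [Finset.sum_add_distrib, this]
  · intro r
    have := hsum (fun i => x i r)
    simp only [hyx, mul_zero] at this
    simp [add_mul, Finset.sum_add_distrib, this]
  · apply Finset.card_lt_card
    rw [Finset.ssubset_iff_of_subset]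
    · refine ⟨i₁, by simpa [hs] using hi₁'.1, ?_⟩
      simp only [Finset.mem_filter, Finset.mem_univ, true_and, ht, step]
      split_ifs with h
      · rw [div_mul_cancel₀ _ h.ne']
        simp
      · rw [div_neg, neg_mul, div_mul_cancel₀ _ hi₁'.2]
        simp
    · intro i hi
      by_contra his
      have h2 := hy0 i his
      simp only [Finset.mem_filter, Finset.mem_univ, true_and, h2, mul_zero, add_zero] at hi
      exact his (by simpa [hs] using hi)

lemma exists_few_fractional {m : ℕ} {ι : Type*} [Fintype ι] [DecidableEq ι]
    (x : ι → Fin m → ℝ) (l : ι → ℝ) (h0 : ∀ i, 0 ≤ l i) (h1 : ∀ i, l i ≤ 1) :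
    ∃ l' : ι → ℝ, (∀ i, 0 ≤ l' i) ∧ (∀ i, l' i ≤ 1) ∧ (∀ i, l i = 0 → l' i = 0) ∧
      ∑ i, l' i = ∑ i, l i ∧ (∀ r, ∑ i, l' i * x i r = ∑ i, l i * x i r) ∧
      (Finset.univ.filter fun i => 0 < l' i ∧ l' i < 1).card ≤ m + 1 := by
  induction hn : (Finset.univ.filter fun i => 0 < l i ∧ l i < 1).card using Nat.strong_induction_on
    generalizing l with
  | _ n ih =>
    by_cases hc : m + 1 < (Finset.univ.filter fun i => 0 < l i ∧ l i < 1).card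
    · obtain ⟨l', a0, a1, az, asum, ax, ac⟩ := exists_fewer_fractional x l h0 h1 hc
      obtain ⟨l'', b0, b1, bz, bsum, bx, bc⟩ := ih _ (hn ▸ ac) l' a0 a1 rfl
      exact ⟨l'', b0, b1, fun i hi => bz i (az i hi), bsum.trans asum,
        fun r => (bx r).trans (ax r), bc⟩
    · exact ⟨l, h0, h1, fun i hi => hi, rfl, fun _ => rfl, not_lt.1 hc⟩

/-- The invariant of the Grinberg–Sevastyanov proof of the Steinitz lemma: if `A` has at least `m`
elements, it carries weights `l ∈ [0,1]^A` of total `|A| - m` under which the `x i` sum to a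
multiple `c ∈ [0,1]` of the sum of the whole family. (The classical case is that of total sum `0`.)
Weights are functions on all of `ι` vanishing off `A`. -/
def SteinitzGood {m : ℕ} {ι : Type*} [Fintype ι] (x : ι → Fin m → ℝ) (A : Finset ι) : Prop :=
  m ≤ A.card → ∃ (l : ι → ℝ) (c : ℝ), (∀ i, 0 ≤ l i) ∧ (∀ i, l i ≤ 1) ∧ (∀ i ∉ A, l i = 0) ∧
    0 ≤ c ∧ c ≤ 1 ∧ ∑ i, l i = (A.card : ℝ) - m ∧ ∀ r, ∑ i, l i * x i r = c * ∑ i, x i r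

lemma steinitzGood_univ {m : ℕ} {ι : Type*} [Fintype ι] (x : ι → Fin m → ℝ) :
    SteinitzGood x Finset.univ := by
  intro hm
  set n := (Finset.univ : Finset ι).card with hn
  have hmn : (m : ℝ) ≤ n := by exact_mod_cast hm
  have h0 : 0 ≤ ((n : ℝ) - m) / n := div_nonneg (by linarith) (by positivity)
  have h1 : ((n : ℝ) - m) / n ≤ 1 :=
    div_le_one_of_le₀ (by have : (0:ℝ) ≤ m := by positivity
                          linarith) (by positivity)
  refine ⟨fun _ => ((n : ℝ) - m) / n, ((n : ℝ) - m) / n, fun _ => h0, fun _ => h1, by simp, h0, h1,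
    ?_, fun r => by rw [Finset.mul_sum]⟩
  rw [Finset.sum_const, ← hn, nsmul_eq_mul]
  rcases Nat.eq_zero_or_pos n with h | h
  · have : m = 0 := by omega
    simp [h, this]
  · field_simp

/-- Rescale the weights to total `|A| - 1 - m` and pass to weights with at most `m + 1` fractional
entries. If none of them vanished on `A`, the non-fractional ones would all be `1`, and the total
would exceed `|A| - (m + 1)`. So some weight is `0`, and that element can be removed. -/
lemma SteinitzGood.exists_erase {m : ℕ} {ι : Type*} [Fintype ι] [DecidableEq ι]
    {x : ι → Fin m → ℝ} {A : Finset ι} (hA : SteinitzGood x A) (hne : 0 < A.card) :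
    ∃ i ∈ A, SteinitzGood x (A.erase i) := by
  by_cases hm : m + 1 ≤ A.card
  swap
  · obtain ⟨i, hi⟩ := Finset.card_pos.1 hne
    refine ⟨i, hi, fun h => ?_⟩
    rw [Finset.card_erase_of_mem hi] at h
    omega
  obtain ⟨l, c, h0, h1, hz, c0, c1, hsum, hx⟩ := hA (by omega)
  have hmR : (m : ℝ) + 1 ≤ A.card := by exact_mod_cast hm
  set q : ℝ := ((A.card : ℝ) - 1 - m) / ((A.card : ℝ) - m) with hq
  have q0 : 0 ≤ q := div_nonneg (by linarith) (by linarith)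
  have q1 : q ≤ 1 := div_le_one_of_le₀ (by linarith) (by linarith)
  obtain ⟨l', a0, a1, az, asum, ax, ac⟩ := exists_few_fractional x (fun i => q * l i)
    (fun i => mul_nonneg q0 (h0 i)) (fun i => mul_le_one₀ q1 (h0 i) (h1 i))
  have hl'z : ∀ i ∉ A, l' i = 0 := fun i hi => az i (by simp [hz i hi])
  have hl'sum : ∑ i, l' i = (A.card : ℝ) - 1 - m := by
    rw [asum, ← Finset.mul_sum, hsum, hq, div_mul_cancel₀ _ (by linarith)]
  obtain ⟨i, hi, hi0⟩ : ∃ i ∈ A, l' i = 0 := by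
    by_contra! hcon
    set s := Finset.univ.filter fun i => 0 < l' i ∧ l' i < 1 with hs
    have hsub : s ⊆ A := by
      intro i hi
      by_contra h
      simp [hs, hl'z i h] at hi
    have hA' : ∑ i, l' i = ∑ i ∈ A \ s, l' i + ∑ i ∈ s, l' i := by
      rw [Finset.sum_sdiff hsub]
      exact (Finset.sum_subset (Finset.subset_univ A) fun i _ hi => hl'z i hi).symm
    have hones : ∑ i ∈ A \ s, l' i = (A.card : ℝ) - s.card := by
      rw [Finset.sum_congr rfl (g := fun _ => (1 : ℝ))]
      · rw [Finset.sum_const, Finset.card_sdiff_of_subset hsub, nsmul_eq_mul, mul_one,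
          Nat.cast_sub (Finset.card_le_card hsub)]
      · intro i hi
        rw [Finset.mem_sdiff] at hi
        have hpos := lt_of_le_of_ne (a0 i) (hcon i hi.1).symm
        by_contra h
        exact hi.2 (by simp [hs, hpos, lt_of_le_of_ne (a1 i) h])
    have hscard : (s.card : ℝ) ≤ m + 1 := by exact_mod_cast ac
    have hfrac : ∑ i ∈ s, l' i = s.card - (m + 1) := by linarith
    have hsne : s.Nonempty := by
      rw [Finset.nonempty_iff_ne_empty]
      intro h
      rw [h] at hfrac
      simp at hfrac
      have : (0 : ℝ) ≤ m := by positivity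
      linarith
    have : 0 < ∑ i ∈ s, l' i := Finset.sum_pos (fun i hi => by
      simp only [hs, Finset.mem_filter] at hi
      exact hi.2.1) hsne
    linarith
  refine ⟨i, hi, fun _ => ⟨l', q * c, a0, a1, ?_, mul_nonneg q0 c0, mul_le_one₀ q1 c0 c1, ?_, ?_⟩⟩
  · intro j hj
    by_cases h : j = i
    · rw [h, hi0]
    · exact hl'z j fun hjA => hj (Finset.mem_erase.2 ⟨h, hjA⟩)
  · rw [hl'sum, Finset.card_erase_of_mem hi, Nat.cast_sub (by omega)]
    push_cast
    ring
  · intro r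
    rw [ax r, mul_assoc, ← hx r, Finset.mul_sum]
    exact Finset.sum_congr rfl fun i _ => by ring

/-- Subtracting the weighted sum leaves weights `1 - l` of total `m` on `A`. -/
lemma SteinitzGood.bound {m : ℕ} {ι : Type*} [Fintype ι] [DecidableEq ι]
    {x : ι → Fin m → ℝ} {A : Finset ι} (hA : SteinitzGood x A) {D S : ℝ} (hD : 0 ≤ D)
    (hx : ∀ i r, |x i r| ≤ D) (hS : ∀ r, |∑ i, x i r| ≤ S) (r : Fin m) :
    |∑ i ∈ A, x i r| ≤ m * D + S := by
  have hS0 : 0 ≤ S := (abs_nonneg _).trans (hS r)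
  by_cases hm : m ≤ A.card
  · obtain ⟨l, c, h0, h1, hz, c0, c1, hsum, hlx⟩ := hA hm
    have hres : ∀ f : ι → ℝ, ∑ i ∈ A, l i * f i = ∑ i, l i * f i := fun f =>
      Finset.sum_subset (Finset.subset_univ A) fun i _ hi => by simp [hz i hi]
    have hsplit : ∑ i ∈ A, x i r = ∑ i ∈ A, (1 - l i) * x i r + c * ∑ i, x i r := by
      rw [← hlx r, ← hres, ← Finset.sum_add_distrib]
      exact Finset.sum_congr rfl fun i _ => by ring
    have hone : ∑ i ∈ A, (1 - l i) = m := by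
      have := hres (fun _ => 1)
      simp only [mul_one] at this
      simp [Finset.sum_sub_distrib, this, hsum]
    rw [hsplit]
    refine (abs_add_le _ _).trans (add_le_add ?_ ?_)
    · rw [← hone, Finset.sum_mul]
      refine (Finset.abs_sum_le_sum_abs _ _).trans (Finset.sum_le_sum fun i _ => ?_)
      rw [abs_mul, abs_of_nonneg (sub_nonneg.2 (h1 i))]
      exact mul_le_mul_of_nonneg_left (hx i r) (sub_nonneg.2 (h1 i))
    · rw [abs_mul, abs_of_nonneg c0]
      exact (mul_le_of_le_one_left (abs_nonneg _) c1).trans (hS r)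
  · have hcard : (A.card : ℝ) ≤ m := by exact_mod_cast (not_le.1 hm).le
    calc |∑ i ∈ A, x i r| ≤ ∑ i ∈ A, |x i r| := Finset.abs_sum_le_sum_abs _ _
      _ ≤ ∑ i ∈ A, D := Finset.sum_le_sum fun i _ => hx i r
      _ = A.card * D := by rw [Finset.sum_const, nsmul_eq_mul]
      _ ≤ m * D := mul_le_mul_of_nonneg_right hcard hD
      _ ≤ m * D + S := by linarith

lemma SteinitzGood.exists_chain {m : ℕ} {ι : Type*} [Fintype ι] [DecidableEq ι]
    {x : ι → Fin m → ℝ} (n : ℕ) {A : Finset ι} (hA : SteinitzGood x A) (hn : A.card = n) :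
    ∃ B : ℕ → Finset ι, Monotone B ∧ (∀ k, n ≤ k → B k = A) ∧
      ∀ k ≤ n, (B k).card = k ∧ SteinitzGood x (B k) := by
  induction n generalizing A with
  | zero => exact ⟨fun _ => A, monotone_const, fun _ _ => rfl, fun k hk => ⟨by dsimp only; omega, hA⟩⟩
  | succ n ih =>
    obtain ⟨i, hi, hgood⟩ := hA.exists_erase (by omega)
    obtain ⟨B, hmono, htop, hB⟩ := ih hgood (by rw [Finset.card_erase_of_mem hi]; omega)
    have hle : ∀ k, B k ⊆ A := fun k =>
      ((hmono (le_max_left k n)).trans (htop _ (le_max_right k n)).le).trans (Finset.erase_subset _ _)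
    refine ⟨fun k => if k ≤ n then B k else A, ?_, ?_, ?_⟩
    · intro a b hab
      dsimp only
      split_ifs with h1 h2 h2
      · exact hmono hab
      · exact hle a
      · omega
      · exact le_rfl
    · intro k hk
      exact if_neg (by omega)
    · intro k hk
      dsimp only
      split_ifs with h
      · exact hB k h
      · exact ⟨by omega, hA⟩

/-- Steinitz lemma for the sup norm, allowing a nonzero total: the family can be enumerated so that
every initial sum is bounded by `m * D + S`. The enumeration is encoded as the chain `B` of its
initial segments. -/
lemma steinitz_chain {m : ℕ} {ι : Type*} [Fintype ι] [DecidableEq ι] (x : ι → Fin m → ℝ)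
    {D S : ℝ} (hD : 0 ≤ D) (hx : ∀ i r, |x i r| ≤ D) (hS : ∀ r, |∑ i, x i r| ≤ S) :
    ∃ B : ℕ → Finset ι, Monotone B ∧ ∀ k ≤ Fintype.card ι, (B k).card = k ∧
      ∀ r, |∑ i ∈ B k, x i r| ≤ m * D + S := by
  obtain ⟨B, hmono, -, hB⟩ := (steinitzGood_univ x).exists_chain _ rfl
  exact ⟨B, hmono, fun k hk => ⟨(hB k hk).1, (hB k hk).2.bound hD hx hS⟩⟩

/-! ### Counting estimates -/

/-- `T`, `-T` and `{0}` are disjoint subsets of the box `[-D, D]^m`. -/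
lemma two_mul_card_add_one_le {m D : ℕ} (T : Finset (Fin m → ℤ))
    (hbox : ∀ c ∈ T, ∀ r, |c r| ≤ D) (hneg : ∀ c ∈ T, -c ∉ T) :
    2 * T.card + 1 ≤ (2 * D + 1) ^ m := by
  classical
  have h0 : (0 : Fin m → ℤ) ∉ T := fun h => hneg 0 h (by simpa using h)
  let U : Finset (Fin m → ℤ) := Fintype.piFinset fun _ => Finset.Icc (-(D : ℤ)) D
  have hU : U.card = (2 * D + 1) ^ m := by
    simp only [U, Fintype.card_piFinset, Int.card_Icc, Finset.prod_const, Finset.card_univ,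
      Fintype.card_fin]
    congr 1
    omega
  have hT : T.image (fun c => -c) ∪ T ∪ {0} ⊆ U := by
    intro c hc
    simp only [U, Fintype.mem_piFinset, Finset.mem_Icc, ← abs_le]
    intro r
    simp only [Finset.mem_union, Finset.mem_image, Finset.mem_singleton] at hc
    rcases hc with (⟨a, ha, rfl⟩ | hc) | rfl
    · simpa using hbox a ha r
    · exact hbox c hc r
    · simp
  have hcard := Finset.card_le_card hT
  rw [Finset.card_union_of_disjoint, Finset.card_union_of_disjoint,
    Finset.card_image_of_injective _ neg_injective, Finset.card_singleton, hU] at hcard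
  · omega
  · rw [Finset.disjoint_left]
    intro c hc hcT
    obtain ⟨a, ha, rfl⟩ := Finset.mem_image.1 hc
    exact hneg a ha hcT
  · rw [Finset.disjoint_singleton_right, Finset.mem_union, Finset.mem_image]
    rintro (⟨a, ha, h⟩ | h)
    · rw [neg_eq_zero] at h
      exact h0 (h ▸ ha)
    · exact h0 h

/-- The comparison of the bound produced by the pigeonhole argument with the claimed one. With
`X`, `Y` the two bases, `X + 2 * D ≤ Y`, so `X ^ m + 2 * D * Y ^ (m - 1) ≤ Y ^ m`, and the second
summand absorbs `H`. -/
lemma numeric_bound (m D H : ℕ) (hH : 2 * H + 1 = (2 * D + 1) ^ m) :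
    (2 * (m * D + D * H) + 1) ^ m + H ≤ (2 * D * (2 * m * D + 1) ^ m + 1) ^ m := by
  rcases Nat.eq_zero_or_pos m with rfl | hm
  · have : H = 0 := by simpa using hH
    simp [this]
  rcases Nat.eq_zero_or_pos D with rfl | hD
  · have : H = 0 := by simpa using hH
    simp [this]
  obtain ⟨k, rfl⟩ : ∃ k, m = k + 1 := ⟨m - 1, by omega⟩
  set P := (2 * (k + 1) * D + 1) ^ (k + 1) with hP
  set X := 2 * ((k + 1) * D + D * H) + 1 with hX
  set Y := 2 * D * P + 1 with hY
  have hP1 : 2 * (k + 1) * D + 1 ≤ P := Nat.le_self_pow (by omega) _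
  have hP2 : 2 * H + 1 ≤ P := by
    rw [hH]
    refine Nat.pow_le_pow_left ?_ _
    nlinarith [Nat.zero_le (k * D)]
  have hXY : X + 2 * D ≤ Y := by
    have h1 := Nat.mul_le_mul_left D hP1
    have h2 := Nat.mul_le_mul_left D hP2
    have h3 : (k + 1) * D ≤ D * ((k + 1) * D) := Nat.le_mul_of_pos_left _ hD
    nlinarith
  have hYD : 2 * D + 1 ≤ Y := by
    have : 1 ≤ X := by omega
    omega
  have hpow1 : X ^ k ≤ Y ^ k := Nat.pow_le_pow_left (by omega) _
  have hpow2 : (2 * D + 1) ^ k ≤ Y ^ k := Nat.pow_le_pow_left hYD _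
  have hH' : H ≤ 2 * D * Y ^ k := by
    have : 2 * H + 1 ≤ (2 * D + 1) * Y ^ k := by
      rw [hH, pow_succ, mul_comm]
      exact Nat.mul_le_mul_left _ hpow2
    nlinarith [Nat.zero_le (Y ^ k), Nat.mul_le_mul_right (Y ^ k) hD]
  calc X ^ (k + 1) + H ≤ X * Y ^ k + 2 * D * Y ^ k := by
        rw [pow_succ, mul_comm]
        exact add_le_add (Nat.mul_le_mul_left _ hpow1) hH'
    _ = (X + 2 * D) * Y ^ k := by ring
    _ ≤ Y * Y ^ k := Nat.mul_le_mul_right _ hXY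
    _ = Y ^ (k + 1) := by rw [pow_succ, mul_comm]

/-! ### Minimal weightings -/

/-- A minimal mixed element in grouped form: a nonnegative weighting `w` of a finite family of
integer vectors `v` with weighted sum `0`, integral on the index set `J` and not identically zero
there, such that the only weightings `0 ≤ d ≤ w` with the same properties (balanced, integral on
`J`) are `0` and `w`. -/
structure IsMinimalWeighting {m : ℕ} {κ : Type*} [Fintype κ] (v : κ → Fin m → ℤ) (J : Set κ)
    (w : κ → ℝ) : Prop where
  nonneg : ∀ k, 0 ≤ w k
  balanced : ∀ r, ∑ k, w k * v k r = 0
  integral : ∀ k ∈ J, ∃ z : ℤ, w k = z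
  exists_ne : ∃ k ∈ J, w k ≠ 0
  minimal : ∀ d : κ → ℝ, (∀ k, 0 ≤ d k) → (∀ k, d k ≤ w k) → (∀ r, ∑ k, d k * v k r = 0) →
    (∀ k ∈ J, ∃ z : ℤ, d k = z) → d = 0 ∨ d = w

/-- Otherwise an equal small weight on `a` and `b` would be a smaller weighting vanishing on `J`.
The case `a = b` shows in particular that `v a ≠ 0`. -/
lemma IsMinimalWeighting.not_neg {m : ℕ} {κ : Type*} [Fintype κ] {v : κ → Fin m → ℤ} {J : Set κ}
    {w : κ → ℝ} (hw : IsMinimalWeighting v J w) {a b : κ} (ha : a ∉ J) (hb : b ∉ J)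
    (hwa : w a ≠ 0) (hwb : w b ≠ 0) : v a ≠ -v b := by
  classical
  intro hab
  have hpa := lt_of_le_of_ne (hw.nonneg a) hwa.symm
  have hpb := lt_of_le_of_ne (hw.nonneg b) hwb.symm
  obtain ⟨k₀, hk₀, hne⟩ := hw.exists_ne
  -- The factor `1 / 2` accounts for the case `a = b`, where both units land on one index.
  set e := min (w a) (w b) / 2 with he
  have hepos : 0 < e := by
    have := lt_min hpa hpb
    positivity
  have hea : e ≤ w a / 2 := by
    have := min_le_left (w a) (w b)
    linarith
  have heb : e ≤ w b / 2 := by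
    have := min_le_right (w a) (w b)
    linarith
  have hJ : ∀ k ∈ J, (Pi.single a e + Pi.single b e : κ → ℝ) k = 0 := by
    intro k hk
    have h1 : k ≠ a := fun h => ha (h ▸ hk)
    have h2 : k ≠ b := fun h => hb (h ▸ hk)
    simp [h1, h2]
  have hcases : (Pi.single a e + Pi.single b e : κ → ℝ) = 0 ∨
      (Pi.single a e + Pi.single b e : κ → ℝ) = w := by
    refine hw.minimal _ ?_ ?_ ?_ ?_
    · intro k
      simp only [Pi.add_apply, Pi.single_apply]
      split_ifs <;> linarith
    · intro k
      simp only [Pi.add_apply, Pi.single_apply]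
      have := hw.nonneg k
      split_ifs with h1 h2 h2
      · subst h1; linarith
      · subst h1; linarith
      · subst h2; linarith
      · linarith
    · intro r
      simp only [Pi.add_apply, add_mul, Finset.sum_add_distrib, Pi.single_apply, ite_mul, zero_mul,
        Finset.sum_ite_eq', Finset.mem_univ, if_true]
      rw [hab]
      simp
    · intro k hk
      exact ⟨0, by rw [hJ k hk]; simp⟩
  rcases hcases with h | h
  · have h := congrFun h a
    simp only [Pi.add_apply, Pi.single_eq_same, Pi.zero_apply] at h
    have : 0 ≤ (Pi.single b e : κ → ℝ) a := by
      rw [Pi.single_apply]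
      split_ifs <;> linarith
    linarith
  · exact hne (by rw [← h, hJ k₀ hk₀])

/-- Indices with fractional weight lie outside `J`, and their vectors are distinct, with no two
opposite; hence there are at most `((2 * D + 1) ^ m - 1) / 2` of them. -/
lemma IsMinimalWeighting.sum_fract_le {m D H : ℕ} {κ : Type*} [Fintype κ] {v : κ → Fin m → ℤ}
    {J : Set κ} {w : κ → ℝ} (hw : IsMinimalWeighting v J w) (hv : ∀ k r, |v k r| ≤ D)
    (hinj : Set.InjOn v Jᶜ) (hH : 2 * H + 1 = (2 * D + 1) ^ m) :
    ∑ k, Int.fract (w k) ≤ H := by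
  classical
  let T : Finset κ := Finset.univ.filter fun k => Int.fract (w k) ≠ 0
  have hTJ : ∀ k ∈ T, k ∉ J := by
    intro k hk hkJ
    obtain ⟨z, hz⟩ := hw.integral k hkJ
    simp [T, hz] at hk
  have hTw : ∀ k ∈ T, w k ≠ 0 := by
    intro k hk h
    simp [T, h] at hk
  have hcard : 2 * (T.image v).card + 1 ≤ (2 * D + 1) ^ m := by
    apply two_mul_card_add_one_le
    · intro c hc
      obtain ⟨k, -, rfl⟩ := Finset.mem_image.1 hc
      exact hv k
    · intro c hc hc'
      obtain ⟨a, ha, rfl⟩ := Finset.mem_image.1 hc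
      obtain ⟨b, hb, hab⟩ := Finset.mem_image.1 hc'
      exact hw.not_neg (hTJ b hb) (hTJ a ha) (hTw b hb) (hTw a ha) hab
  rw [Finset.card_image_of_injOn (hinj.mono fun k hk => hTJ k hk)] at hcard
  have hTH : T.card ≤ H := by omega
  calc ∑ k, Int.fract (w k) = ∑ k ∈ T, Int.fract (w k) :=
        (Finset.sum_filter_ne_zero _).symm
    _ ≤ ∑ k ∈ T, (1 : ℝ) := Finset.sum_le_sum fun k _ => (Int.fract_lt_one _).le
    _ = T.card := by simp
    _ ≤ H := by exact_mod_cast hTH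

/-- Take `⌊w k⌋` copies of each `v k`, and order these vectors by the Steinitz lemma; their total is
minus the contribution of the fractional parts, hence bounded by `D * H`. Two equal initial sums
other than the empty and the full one would bound a block of vectors summing to `0`, contradicting
minimality. So the initial sums, the full one excluded, are distinct integer points of a box. -/
lemma IsMinimalWeighting.sum_floor_le {m D H : ℕ} {κ : Type*} [Fintype κ] {v : κ → Fin m → ℤ}
    {J : Set κ} {w : κ → ℝ} (hw : IsMinimalWeighting v J w) (hv : ∀ k r, |v k r| ≤ D)
    (hfr : ∑ k, Int.fract (w k) ≤ H) :
    ∑ k, ⌊w k⌋₊ ≤ (2 * (m * D + D * H) + 1) ^ m := by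
  classical
  let ι := Σ k : κ, Fin ⌊w k⌋₊
  have hcardι : Fintype.card ι = ∑ k, ⌊w k⌋₊ := by simp [ι]
  have hvR : ∀ k r, |(v k r : ℝ)| ≤ D := fun k r => by exact_mod_cast hv k r
  have hfloor : ∀ k, (⌊w k⌋₊ : ℝ) = w k - Int.fract (w k) := fun k => by
    rw [natCast_floor_eq_intCast_floor (hw.nonneg k), Int.self_sub_fract]
  have htot : ∀ r, |∑ i : ι, (v i.1 r : ℝ)| ≤ D * H := by
    intro r
    have h1 : ∑ i : ι, (v i.1 r : ℝ) = - ∑ k, Int.fract (w k) * v k r := by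
      rw [Fintype.sum_sigma, ← sub_eq_zero, sub_neg_eq_add, ← Finset.sum_add_distrib,
        ← hw.balanced r]
      refine Finset.sum_congr rfl fun k _ => ?_
      simp only [Finset.sum_const, Finset.card_univ, Fintype.card_fin, nsmul_eq_mul, hfloor]
      ring
    rw [h1, abs_neg]
    calc |∑ k, Int.fract (w k) * (v k r : ℝ)| ≤ ∑ k, |Int.fract (w k) * (v k r : ℝ)| :=
          Finset.abs_sum_le_sum_abs _ _
      _ ≤ ∑ k, Int.fract (w k) * D := Finset.sum_le_sum fun k _ => by
          rw [abs_mul, abs_of_nonneg (Int.fract_nonneg _)]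
          exact mul_le_mul_of_nonneg_left (hvR k r) (Int.fract_nonneg _)
      _ = (∑ k, Int.fract (w k)) * D := (Finset.sum_mul _ _ _).symm
      _ ≤ H * D := mul_le_mul_of_nonneg_right hfr (by positivity)
      _ = D * H := mul_comm _ _
  obtain ⟨B, hmono, hB⟩ := steinitz_chain (fun (i : ι) r => (v i.1 r : ℝ))
    (Nat.cast_nonneg D) (fun i r => hvR i.1 r) htot
  set t := Fintype.card ι with ht
  let p : ℕ → Fin m → ℤ := fun a r => ∑ i ∈ B a, v i.1 r
  have key : ∀ a b, a < b → b < t → p a ≠ p b := by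
    intro a b hab hbt hp
    have hsub : B a ⊆ B b := hmono hab.le
    set C := B b \ B a with hC
    have hCcard : C.card = b - a := by
      rw [hC, Finset.card_sdiff_of_subset hsub, (hB b hbt.le).1, (hB a (hab.le.trans hbt.le)).1]
    -- `C` is the block between the two initial segments, `d` its vector of multiplicities.
    let d : κ → ℝ := fun k => ((C.filter fun i => i.1 = k).card : ℝ)
    have hdsum : ∀ f : κ → ℝ, ∑ k, d k * f k = ∑ i ∈ C, f i.1 := by
      intro f
      rw [← Finset.sum_fiberwise C (fun i => i.1) (fun i => f i.1)]
      refine Finset.sum_congr rfl fun k _ => ?_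
      rw [Finset.sum_congr rfl (g := fun _ => f k), Finset.sum_const, nsmul_eq_mul]
      intro i hi
      rw [(Finset.mem_filter.1 hi).2]
    have hdtot : ∑ k, d k = (b : ℝ) - a := by
      have := hdsum fun _ => 1
      simp only [mul_one, Finset.sum_const, nsmul_eq_mul, hCcard] at this
      rw [this, Nat.cast_sub hab.le]
    have habR : (a : ℝ) < b := by exact_mod_cast hab
    have hcases : d = 0 ∨ d = w := by
      refine hw.minimal d (fun k => Nat.cast_nonneg _) ?_ ?_ ?_
      · intro k
        refine le_trans ?_ (Nat.floor_le (hw.nonneg k))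
        have : (C.filter fun i => i.1 = k) ⊆ Finset.univ.image fun j : Fin ⌊w k⌋₊ => (⟨k, j⟩ : ι) := by
          rintro ⟨k', j⟩ hi
          obtain rfl : k' = k := (Finset.mem_filter.1 hi).2
          exact Finset.mem_image.2 ⟨j, Finset.mem_univ _, rfl⟩
        have := (Finset.card_le_card this).trans Finset.card_image_le
        rw [Finset.card_univ, Fintype.card_fin] at this
        exact Nat.cast_le.2 this
      · intro r
        rw [hdsum fun k => (v k r : ℝ)]
        have h1 := congrFun hp r
        simp only [p] at h1
        rw [← Finset.sum_sdiff hsub, ← hC] at h1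
        have : ∑ i ∈ C, v i.1 r = 0 := by linarith
        exact_mod_cast this
      · exact fun k _ => ⟨((C.filter fun i => i.1 = k).card : ℤ), by simp [d]⟩
    rcases hcases with h | h
    · rw [h] at hdtot
      simp at hdtot
      linarith
    · have h1 : (t : ℝ) ≤ ∑ k, w k := by
        rw [hcardι]
        push_cast
        exact Finset.sum_le_sum fun k _ => Nat.floor_le (hw.nonneg k)
      rw [← h, hdtot] at h1
      have : (b : ℝ) < t := by exact_mod_cast hbt
      have : (0 : ℝ) ≤ a := by positivity
      linarith
  set M := m * D + D * H with hM
  let U : Finset (Fin m → ℤ) := Fintype.piFinset fun _ => Finset.Icc (-(M : ℤ)) M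
  have hU : U.card = (2 * M + 1) ^ m := by
    simp only [U, Fintype.card_piFinset, Int.card_Icc, Finset.prod_const, Finset.card_univ,
      Fintype.card_fin]
    congr 1
    omega
  rw [← hcardι, ← hU, ← Finset.card_range t]
  apply Finset.card_le_card_of_injOn p
  · intro a ha
    have ha : a < t := by simpa using ha
    simp only [U, Finset.mem_coe, Fintype.mem_piFinset, Finset.mem_Icc, ← abs_le]
    intro r
    have := (hB a ha.le).2 r
    have h2 : |((p a r : ℤ) : ℝ)| ≤ ((M : ℤ) : ℝ) := by
      simp only [p, hM]
      push_cast
      exact this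
    exact_mod_cast h2
  · intro a ha b hb hab
    have ha : a < t := by simpa using ha
    have hb : b < t := by simpa using hb
    rcases lt_trichotomy a b with h | h | h
    · exact absurd hab (key a b h hb)
    · exact h
    · exact absurd hab.symm (key b a h ha)

lemma IsMinimalWeighting.sum_le {m D : ℕ} {κ : Type*} [Fintype κ] {v : κ → Fin m → ℤ}
    {J : Set κ} {w : κ → ℝ} (hw : IsMinimalWeighting v J w) (hv : ∀ k r, |v k r| ≤ D)
    (hinj : Set.InjOn v Jᶜ) :
    ∑ k, w k ≤ (2 * (D : ℝ) * (2 * (m : ℝ) * (D : ℝ) + 1) ^ m + 1) ^ m := by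
  obtain ⟨H, hH⟩ : ∃ H, (2 * D + 1) ^ m = 2 * H + 1 := (odd_two_mul_add_one D).pow
  have hfr := hw.sum_fract_le hv hinj hH.symm
  have hfl := hw.sum_floor_le hv hfr
  have hnum := numeric_bound m D H hH.symm
  have h1 : ∑ k, w k = ((∑ k, ⌊w k⌋₊ : ℕ) : ℝ) + ∑ k, Int.fract (w k) := by
    push_cast
    rw [← Finset.sum_add_distrib]
    refine Finset.sum_congr rfl fun k _ => ?_
    rw [natCast_floor_eq_intCast_floor (hw.nonneg k), Int.floor_add_fract]
  have h2 : ((∑ k, ⌊w k⌋₊ : ℕ) : ℝ) + H ≤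
      (((2 * D * (2 * m * D + 1) ^ m + 1) ^ m : ℕ) : ℝ) := by
    exact_mod_cast (Nat.add_le_add_right hfl H).trans hnum
  rw [h1]
  push_cast at h2 ⊢
  linarith

/-! ### Elements of the mixed Graver basis -/

lemma natAbs_le_matNormInf {R C : Type*} [Fintype R] [Fintype C] (E : Matrix R C ℤ) (r : R) (c : C) :
    (E r c).natAbs ≤ matNormInf E :=
  Finset.le_sup (f := fun p : R × C => (E p.1 p.2).natAbs) (Finset.mem_univ (r, c))

/-- The bound for minimal elements of the mixed kernel with nonzero integral part, obtained by
grouping coordinates. -/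
lemma vnorm1_le_of_minimal {m N : ℕ} (E : Matrix (Fin m) (Fin N) ℤ) (I : Finset (Fin N))
    (g : Fin N → ℝ) (hker : MixedKer E I g) (hne : ∃ i ∈ I, g i ≠ 0)
    (hmin : ∀ y, MixedKer E I y → y ≠ 0 → y ≠ g → ¬ ConformalTo y g) :
    vnorm1 g ≤
      (2 * (matNormInf E : ℝ) * (2 * (m : ℝ) * (matNormInf E : ℝ) + 1) ^ m + 1) ^ m := by
  classical
  set D := matNormInf E with hD
  let sg : Fin N → ℤ := fun j => if 0 ≤ g j then 1 else -1
  have hsg : ∀ j, (sg j : ℝ) * |g j| = g j := by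
    intro j
    simp only [sg]
    split_ifs with h
    · simp [abs_of_nonneg h]
    · simp [abs_of_neg (not_le.1 h)]
  have hsgabs : ∀ j (z : ℤ), |sg j * z| = |z| := by
    intro j z
    simp only [sg]
    split_ifs <;> simp
  have hcol : ∀ j r, |sg j * E r j| ≤ (D : ℤ) := by
    intro j r
    rw [hsgabs, Int.abs_eq_natAbs]
    exact_mod_cast natAbs_le_matNormInf E r j
  -- Integral coordinates keep their own index, continuous ones are grouped by signed column;
  -- `w` is the total absolute value of `g` on a group.
  let κ := Fin N ⊕ (Fin m → Set.Icc (-(D : ℤ)) D)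
  let v : κ → Fin m → ℤ := Sum.elim (fun j r => sg j * E r j) (fun c r => (c r : ℤ))
  let π : Fin N → κ := fun j =>
    if j ∈ I then Sum.inl j else Sum.inr fun r => ⟨sg j * E r j, abs_le.1 (hcol j r)⟩
  have hvπ : ∀ j r, v (π j) r = sg j * E r j := by
    intro j r
    simp only [π]
    split_ifs <;> simp [v]
  have hπI : ∀ i ∈ I, ∀ j, π j = π i ↔ j = i := by
    intro i hi j
    refine ⟨fun h => ?_, fun h => h ▸ rfl⟩
    by_cases hj : j ∈ I
    · simp only [π, hi, hj, if_true] at h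
      exact Sum.inl_injective h
    · simp [π, hi, hj] at h
  let w : κ → ℝ := fun k => ∑ j, if π j = k then |g j| else 0
  have hw0 : ∀ k, 0 ≤ w k := fun k => Finset.sum_nonneg fun j _ => by
    split_ifs
    · exact abs_nonneg _
    · exact le_rfl
  have hwI : ∀ i ∈ I, w (π i) = |g i| := by
    intro i hi
    simp only [w, hπI i hi]
    simp
  have hwsum : ∀ f : κ → ℝ, ∑ k, w k * f k = ∑ j, |g j| * f (π j) := by
    intro f
    simp only [w, Finset.sum_mul]
    rw [Finset.sum_comm]
    refine Finset.sum_congr rfl fun j _ => ?_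
    simp only [ite_mul, zero_mul]
    rw [Finset.sum_ite_eq, if_pos (Finset.mem_univ _)]
  have hinl : ∀ k ∈ Set.range (Sum.inl : Fin N → κ), (∃ i ∈ I, k = π i) ∨ w k = 0 := by
    rintro _ ⟨i, rfl⟩
    by_cases hi : i ∈ I
    · exact Or.inl ⟨i, hi, by simp [π, hi]⟩
    · refine Or.inr (Finset.sum_eq_zero fun j _ => if_neg ?_)
      intro h
      by_cases hj : j ∈ I
      · have : j = i := by
          simp only [π, hj, if_true] at h
          exact Sum.inl_injective h
        exact hi (this ▸ hj)
      · simp [π, hj] at h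
  have hkerg : ∀ r, ∑ j, (E r j : ℝ) * g j = 0 := by
    intro r
    have := congrFun hker.1 r
    simpa [Matrix.mulVec, dotProduct] using this
  have hW : IsMinimalWeighting v (Set.range (Sum.inl : Fin N → κ)) w := by
    refine ⟨hw0, ?_, ?_, ?_, ?_⟩
    · intro r
      rw [hwsum fun k => (v k r : ℝ), ← hkerg r]
      refine Finset.sum_congr rfl fun j _ => ?_
      rw [hvπ]
      push_cast
      linear_combination (E r j : ℝ) * hsg j
    · intro k hk
      rcases hinl k hk with ⟨i, hi, rfl⟩ | h
      · obtain ⟨z, hz⟩ := hker.2 i hi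
        exact ⟨|z|, by rw [hwI i hi, hz]; push_cast; rfl⟩
      · exact ⟨0, by simp [h]⟩
    · obtain ⟨i, hi, hgi⟩ := hne
      exact ⟨π i, ⟨i, by simp [π, hi]⟩, by rw [hwI i hi]; exact abs_ne_zero.2 hgi⟩
    · intro d hd0 hdw hdbal hdint
      -- Distribute `d k` over the group of `k` in proportion to `g`.
      let y : Fin N → ℝ := fun j => g j * (d (π j) / w (π j))
      have hq0 : ∀ k, 0 ≤ d k / w k := fun k => div_nonneg (hd0 k) (hw0 k)
      have hq1 : ∀ k, d k / w k ≤ 1 := fun k => div_le_one_of_le₀ (hdw k) (hw0 k)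
      have hwd : ∀ k, w k * (d k / w k) = d k := by
        intro k
        rcases eq_or_ne (w k) 0 with h | h
        · have : d k = 0 := le_antisymm (h ▸ hdw k) (hd0 k)
          simp [h, this]
        · field_simp
      have hconf : ConformalTo y g := by
        intro j
        refine ⟨?_, ?_⟩
        · simp only [y]
          rw [abs_mul, abs_of_nonneg (hq0 _)]
          exact mul_le_of_le_one_right (abs_nonneg _) (hq1 _)
        · have : y j * g j = (g j) ^ 2 * (d (π j) / w (π j)) := by simp only [y]; ring
          rw [this]
          exact mul_nonneg (sq_nonneg _) (hq0 _)
      have hyker : MixedKer E I y := by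
        refine ⟨?_, ?_⟩
        · funext r
          have h1 : ∑ j, (E r j : ℝ) * y j = 0 := by
            rw [← hdbal r]
            have : ∑ k, d k * (v k r : ℝ) = ∑ k, w k * ((d k / w k) * v k r) :=
              Finset.sum_congr rfl fun k _ => by rw [← mul_assoc, hwd]
            rw [this, hwsum fun k => (d k / w k) * (v k r : ℝ)]
            refine Finset.sum_congr rfl fun j _ => ?_
            simp only [y, hvπ]
            push_cast
            linear_combination -(E r j : ℝ) * (d (π j) / w (π j)) * hsg j
          simpa [Matrix.mulVec, dotProduct] using h1
        · intro i hi
          obtain ⟨z, hz⟩ := hdint (π i) ⟨i, by simp [π, hi]⟩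
          refine ⟨sg i * z, ?_⟩
          simp only [y]
          push_cast
          have h1 := hwd (π i)
          rw [hwI i hi] at h1 ⊢
          rw [← hz]
          linear_combination (sg i : ℝ) * h1 - (d (π i) / |g i|) * hsg i
      by_cases hy0 : y = 0
      · left
        funext k
        by_contra hk
        have hwk : w k ≠ 0 := fun h => hk (le_antisymm ((hdw k).trans h.le) (hd0 k))
        obtain ⟨j, -, hj⟩ := Finset.exists_ne_zero_of_sum_ne_zero hwk
        have hjk : π j = k := by
          by_contra h
          simp [h] at hj
        rw [if_pos hjk] at hj
        have := congrFun hy0 j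
        simp only [y, hjk, Pi.zero_apply, mul_eq_zero, div_eq_zero_iff] at this
        rcases this with h | h | h
        · simp [h] at hj
        · exact hk h
        · exact hwk h
      · right
        have hyg : y = g := by
          by_contra h
          exact hmin y hyker hy0 h hconf
        funext k
        rcases eq_or_ne (w k) 0 with hwk | hwk
        · rw [hwk]
          exact le_antisymm (hwk ▸ hdw k) (hd0 k)
        obtain ⟨j, -, hj⟩ := Finset.exists_ne_zero_of_sum_ne_zero hwk
        have hjk : π j = k := by
          by_contra h
          simp [h] at hj
        rw [if_pos hjk] at hj
        have := congrFun hyg j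
        simp only [y, hjk] at this
        have hgj : g j ≠ 0 := abs_ne_zero.1 hj
        have h1 : d k / w k = 1 := by
          field_simp at this
          field_simp
          linarith
        exact (div_eq_one_iff_eq hwk).1 h1
  have hvD : ∀ k r, |v k r| ≤ (D : ℤ) := by
    rintro (j | c) r
    · exact hcol j r
    · exact abs_le.2 (c r).2
  have hinj : Set.InjOn v (Set.range (Sum.inl : Fin N → κ))ᶜ := by
    rintro (j | c) hk (j' | c') hk' h
    · simp at hk
    · simp at hk
    · simp at hk'
    · congr 1
      funext r
      exact Subtype.ext (congrFun h r)
  have := hW.sum_le hvD hinj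
  have h1 := hwsum fun _ => 1
  simp only [mul_one] at h1
  rw [h1] at this
  exact this

/-- A circuit is conformally minimal among the integral kernel vectors, i.e. it is a minimal element
of the mixed kernel with all columns integral. -/
lemma circuit_minimal {R C : Type*} [Fintype C] [DecidableEq C] (E : Matrix R C ℤ) (I : Finset C)
    (g : C → ℝ) (hI : ∀ i ∈ I, g i = 0) (gz : {i : C // i ∉ I} → ℤ)
    (hgz : ∀ i : {i : C // i ∉ I}, g i.1 = gz i)
    (hc : IsCircuit (E.submatrix id (Subtype.val : {i : C // i ∉ I} → C)) gz) :
    MixedKer E Finset.univ g ∧ (∃ i ∈ Finset.univ, g i ≠ 0) ∧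
      ∀ y, MixedKer E Finset.univ y → y ≠ 0 → y ≠ g → ¬ ConformalTo y g := by
  obtain ⟨hne, hker, hgcd, hmin⟩ := hc
  have hsum : ∀ y : C → ℝ, (∀ i ∈ I, y i = 0) → ∀ r,
      ∑ j, (E r j : ℝ) * y j = ∑ j : {i : C // i ∉ I}, (E r j.1 : ℝ) * y j.1 := by
    intro y hy r
    rw [← Finset.sum_compl_add_sum I, Finset.sum_eq_zero (s := I) fun i hi => by simp [hy i hi],
      add_zero]
    exact Finset.sum_subtype _ (fun i => Finset.mem_compl) _
  have hgker : ∀ r, ∑ j : {i : C // i ∉ I}, (E r j.1 : ℝ) * gz j = 0 := by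
    intro r
    have h := congrFun hker r
    simp only [Matrix.mulVec, dotProduct, Matrix.submatrix_apply, id, Pi.zero_apply] at h
    exact_mod_cast h
  obtain ⟨i₀, hi₀⟩ := Function.ne_iff.1 hne
  have hi₀ : gz i₀ ≠ 0 := hi₀
  refine ⟨⟨?_, ?_⟩, ⟨i₀.1, Finset.mem_univ _, by rw [hgz]; exact_mod_cast hi₀⟩, ?_⟩
  · funext r
    have h := hsum g hI r
    simp only [hgz, hgker] at h
    simpa [Matrix.mulVec, dotProduct] using h
  · intro i _
    by_cases hi : i ∈ I
    · exact ⟨0, by simp [hI i hi]⟩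
    · exact ⟨gz ⟨i, hi⟩, hgz ⟨i, hi⟩⟩
  intro y hy hy0 hyg hconf
  have hyI : ∀ i ∈ I, y i = 0 := by
    intro i hi
    have h := (hconf i).1
    rw [hI i hi, abs_zero] at h
    exact abs_eq_zero.1 (le_antisymm h (abs_nonneg _))
  choose yz hyz using fun i : {i : C // i ∉ I} => hy.2 i.1 (Finset.mem_univ _)
  have hyker : ∀ r, ∑ j : {i : C // i ∉ I}, (E r j.1 : ℝ) * yz j = 0 := by
    intro r
    have h := congrFun hy.1 r
    simp only [Matrix.mulVec, dotProduct, Matrix.map_apply, Pi.zero_apply] at h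
    rw [hsum y hyI r] at h
    simpa only [hyz] using h
  have hzero : ∀ i, gz i = 0 → yz i = 0 := by
    intro i hi
    have h := (hconf i.1).1
    rw [hgz, hi, Int.cast_zero, abs_zero, hyz] at h
    exact_mod_cast abs_eq_zero.1 (le_antisymm h (abs_nonneg _))
  -- Cancelling the coordinate `i₀` leaves a kernel vector of smaller support, so it vanishes.
  have hprop : ∀ i, gz i₀ * yz i = yz i₀ * gz i := by
    by_contra! hcon
    obtain ⟨i₁, hi₁⟩ := hcon
    refine hmin (fun i => ((gz i₀ * yz i - yz i₀ * gz i : ℤ) : ℝ)) ?_ ?_ ?_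
    · refine Function.ne_iff.2 ⟨i₁, ?_⟩
      simp only [Pi.zero_apply, ne_eq, Int.cast_eq_zero]
      exact sub_ne_zero.2 hi₁
    · funext r
      simp only [Matrix.mulVec, dotProduct, Matrix.map_apply, Matrix.submatrix_apply, id,
        Pi.zero_apply]
      have h1 := hyker r
      have h2 := hgker r
      calc ∑ j : {i : C // i ∉ I}, (E r j.1 : ℝ) * ((gz i₀ * yz j - yz i₀ * gz j : ℤ) : ℝ)
          = gz i₀ * ∑ j : {i : C // i ∉ I}, (E r j.1 : ℝ) * yz j
            - yz i₀ * ∑ j : {i : C // i ∉ I}, (E r j.1 : ℝ) * gz j := by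
            rw [Finset.mul_sum, Finset.mul_sum, ← Finset.sum_sub_distrib]
            refine Finset.sum_congr rfl fun j _ => ?_
            push_cast
            ring
        _ = 0 := by rw [h1, h2]; simp
    · rw [Set.ssubset_iff_of_subset]
      · refine ⟨i₀, by simpa using hi₀, ?_⟩
        simp only [Function.mem_support, not_not, Int.cast_eq_zero]
        ring
      · intro i hi h
        have h : gz i = 0 := Int.cast_eq_zero.1 h
        exact hi (by simp [h, hzero i h])
  have hdvd : (gz i₀).natAbs ∣ (yz i₀).natAbs := by
    have h : (gz i₀).natAbs ∣
        Finset.univ.gcd fun i => (yz i₀).natAbs * (gz i).natAbs := by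
      refine Finset.dvd_gcd fun i _ => ?_
      rw [← Int.natAbs_mul, ← hprop i, Int.natAbs_mul]
      exact dvd_mul_right _ _
    rw [Finset.gcd_mul_left, hgcd] at h
    simpa using h
  obtain ⟨c, hcy⟩ := Int.natAbs_dvd_natAbs.1 hdvd
  have hyc : ∀ i, yz i = c * gz i := by
    intro i
    have h := hprop i
    rw [hcy] at h
    exact mul_left_cancel₀ hi₀ (by linarith)
  have hle : |gz i₀ * c| ≤ |gz i₀| := by
    have h := (hconf i₀.1).1
    rw [hgz, hyz, hcy] at h
    exact_mod_cast h
  have hnn : 0 ≤ gz i₀ * c * gz i₀ := by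
    have h := (hconf i₀.1).2
    rw [hgz, hyz, hcy] at h
    exact_mod_cast h
  have hpos : 0 < gz i₀ * gz i₀ := mul_self_pos.2 hi₀
  have hc0 : 0 ≤ c := by
    by_contra! h
    nlinarith
  have hc1 : c ≤ 1 := by
    rw [abs_mul] at hle
    have h : |c| ≤ 1 := by
      by_contra! h
      nlinarith [abs_pos.2 hi₀]
    exact (le_abs_self c).trans h
  obtain rfl | rfl : c = 0 ∨ c = 1 := by omega
  · apply hy0
    funext i
    by_cases hi : i ∈ I
    · exact hyI i hi
    · simpa [hyc] using hyz ⟨i, hi⟩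
  · apply hyg
    funext i
    by_cases hi : i ∈ I
    · rw [hyI i hi, hI i hi]
    · have h1 := hyz ⟨i, hi⟩
      have h2 := hgz ⟨i, hi⟩
      rw [hyc, one_mul] at h1
      exact h1.trans h2.symm

/-- every element of the mixed Graver basis satisfies
`‖g‖₁ ≤ (2‖E‖∞ (2m‖E‖∞ + 1)^m + 1)^m`. -/
theorem mixedGraver_norm1_bound (m N : ℕ) (E : Matrix (Fin m) (Fin N) ℤ)
    (I : Finset (Fin N)) (g : Fin N → ℝ) (hg : InMixedGraver E I g) :
    vnorm1 g ≤
      (2 * (matNormInf E : ℝ) * (2 * (m : ℝ) * (matNormInf E : ℝ) + 1) ^ m + 1) ^ m := by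
  rcases hg with ⟨hker, hne, hmin⟩ | ⟨hI, gz, hgz, hc⟩
  · exact vnorm1_le_of_minimal E I g hker hne hmin
  · obtain ⟨hker, hne, hmin⟩ := circuit_minimal E I g hI gz hgz hc
    exact vnorm1_le_of_minimal E Finset.univ g hker hne hmin
end

section
/- Let E be an integer m×N matrix and let I ⊆ [N] be any set of columns designated integral. Then every element g of the mixed Graver basis G_X(E) satisfies ‖g‖₁ ≤ (2m²‖E‖∞ + 1)^{m+1}. -/
/-!
Pass to `|g|` by flipping the signs of columns, and suppose `m` and `Δ = ‖E‖∞` are positive (otherwise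
`E = 0` and a minimal `g` is a unit vector).

The nonnegative vector `g` is first written as a finite sum of nonzero, nonnegative *pieces* `w`, each
integral on `I`, with `‖w‖₁ ≤ m + 1` and with `E w` an integer vector of sup-norm at most `m Δ`
(`mem_closure_pieces`). On the integral coordinates the pieces are unit vectors. The continuous part
`q` has `E q` integral; it is rounded down to the grid `(1/p) ℤ` for a large prime `p` and regarded as
a long sequence of columns in `(ℤ/p)^m`. By Olson's theorem (the Davenport constant of `(ℤ/p)^m` is
`m (p - 1) + 1`, here `exists_zeroSum_subset`, from Chevalley–Warning), any `m (p - 1) + 1` terms of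
this sequence contain a nonempty zero-sum subsequence. It is a piece of norm at most `m`, and can be
split off (`grid_mem_closure_pieces`). Once no more can be split off, the remainder, rounding error
included, is itself a piece.

The images of the `K` pieces are integer vectors summing to zero. The Steinitz lemma in the form of
Grinberg and Sevastyanov (`steinitz_chain`) provides a chain of `K` nonempty sets of pieces whose
partial sums lie in the box `[-m²Δ, m²Δ]^m`. If `K > (2m²Δ + 1)^m`, two partial sums agree, and the
pieces in the difference of the two sets sum to a proper conformal kernel element below `g`,
contradicting minimality (`nonneg_bound`). Hence `‖g‖₁ ≤ (m + 1) K ≤ (2m²Δ + 1)^(m+1)`.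

Circuits reduce to the same argument, because a circuit is conformally minimal among the integral
kernel elements (`circuit_minimal`), that is, a Graver element with all columns integral.
-/

open Matrix BigOperators

/-! ### Zero-sum subfamilies modulo a prime -/

/-- Olson's theorem for `(ℤ/p)^m`: more than `m (p - 1)` vectors contain a nonempty subfamily with sum
zero modulo `p`. The support of a nontrivial common zero of the `m` polynomials
`∑ t, f t i * X t ^ (p - 1)` is such a subfamily. -/
lemma exists_zeroSum_subset {σ : Type*} (p m : ℕ) [Fact p.Prime] (T : Finset σ)
    (f : σ → Fin m → ℤ) (hT : m * (p - 1) < T.card) :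
    ∃ U ⊆ T, U.Nonempty ∧ ∀ i, (p : ℤ) ∣ ∑ t ∈ U, f t i := by
  classical
  have hp : p.Prime := Fact.out
  let F : Fin m → MvPolynomial T (ZMod p) :=
    fun i => ∑ t : T, (f t i : ZMod p) • MvPolynomial.X t ^ (p - 1)
  have hdeg : ∑ i, (F i).totalDegree < Fintype.card T := by
    calc ∑ i, (F i).totalDegree ≤ ∑ _i : Fin m, (p - 1) := by
          refine Finset.sum_le_sum fun i _ => ?_
          apply MvPolynomial.totalDegree_finsetSum_le
          intro t _
          exact (MvPolynomial.totalDegree_smul_le ..).trans (MvPolynomial.totalDegree_X_pow ..).le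
      _ < Fintype.card T := by simpa using hT
  have hdvd := char_dvd_card_solutions_of_fintype_sum_lt p hdeg
  rw [Fintype.card_eq_nat_card] at hdvd
  let z : {x : T → ZMod p // ∀ i, MvPolynomial.eval x (F i) = 0} :=
    ⟨0, by
      intro i
      have h1 : p - 1 ≠ 0 := by have := hp.two_le; omega
      simp [F, map_sum, h1]⟩
  have : Nonempty {x : T → ZMod p // ∀ i, MvPolynomial.eval x (F i) = 0} := ⟨z⟩
  have : Nontrivial {x : T → ZMod p // ∀ i, MvPolynomial.eval x (F i) = 0} :=
    Finite.one_lt_card_iff_nontrivial.1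
      (hp.one_lt.trans_le (Nat.le_of_dvd Nat.card_pos hdvd))
  obtain ⟨x, hx⟩ := exists_ne z
  refine ⟨({a | x.1 a ≠ 0} : Finset T).map ⟨(↑), Subtype.val_injective⟩, ?_, ?_, ?_⟩
  · simp +contextual [Finset.subset_iff]
  · rw [← Subtype.coe_ne_coe, Function.ne_iff] at hx
    obtain ⟨a, ha⟩ := hx
    have ha' : x.1 a ≠ 0 := ha
    exact ⟨a, by simpa using ha'⟩
  · intro i
    rw [← ZMod.intCast_zmod_eq_zero_iff_dvd]
    have := x.2 i
    simpa [F, ZMod.pow_card_sub_one, Finset.sum_filter] using this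

/-! ### The Steinitz lemma -/

/-- The weights in `[0, 1]`, supported in `S` and of total mass `c`, for which the weighted sum of the
vectors `x i` vanishes. The Grinberg–Sevastyanov argument maintains that this polytope is nonempty
for `c = |S| - m`. -/
def steinitzWeights {ι : Type*} [Fintype ι] {m : ℕ} (x : ι → Fin m → ℝ) (S : Finset ι) (c : ℝ) :
    Set (ι → ℝ) :=
  {l | (∀ i, 0 ≤ l i ∧ l i ≤ 1) ∧ (∀ i, i ∉ S → l i = 0) ∧ ∑ i, l i = c ∧
    ∀ j, ∑ i, l i * x i j = 0}

lemma isCompact_steinitzWeights {ι : Type*} [Fintype ι] {m : ℕ} (x : ι → Fin m → ℝ)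
    (S : Finset ι) (c : ℝ) : IsCompact (steinitzWeights x S c) := by
  refine (isCompact_Icc (a := (0 : ι → ℝ)) (b := 1)).of_isClosed_subset ?_ ?_
  · simp only [steinitzWeights, Set.ofPred_and, Set.ofPred_forall]
    refine IsClosed.inter ?_ (IsClosed.inter ?_ (IsClosed.inter ?_ ?_))
    · exact isClosed_iInter fun i =>
        (isClosed_le continuous_const (continuous_apply i)).inter
          (isClosed_le (continuous_apply i) continuous_const)
    · exact isClosed_iInter fun i => isClosed_iInter fun _ =>
        isClosed_eq (continuous_apply i) continuous_const
    · exact isClosed_eq (by fun_prop) continuous_const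
    · exact isClosed_iInter fun j => isClosed_eq (by fun_prop) continuous_const
  · intro l hl
    exact ⟨fun i => (hl.1 i).1, fun i => (hl.1 i).2⟩

/-- More than `m + 1` vectors in `ℝ^m` are affinely dependent; stated for families, so that repeated
vectors count separately. -/
lemma exists_affine_relation {ι : Type*} [Fintype ι] {m : ℕ} (x : ι → Fin m → ℝ)
    (F : Finset ι) (hF : m + 1 < F.card) :
    ∃ d : ι → ℝ, d ≠ 0 ∧ (∀ i, i ∉ F → d i = 0) ∧ ∑ i, d i = 0 ∧
      ∀ j, ∑ i, d i * x i j = 0 := by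
  classical
  let L : (F → ℝ) →ₗ[ℝ] (ℝ × (Fin m → ℝ)) :=
    { toFun := fun d => (∑ i, d i, fun j => ∑ i, d i * x i j)
      map_add' := by
        intro a b
        ext <;> simp [Finset.sum_add_distrib, add_mul]
      map_smul' := by
        intro a b
        ext <;> simp [Finset.mul_sum, mul_assoc] }
  have hL : LinearMap.ker L ≠ ⊥ := by
    apply LinearMap.ker_ne_bot_of_finrank_lt
    simp
    omega
  obtain ⟨d, hd, hd0⟩ := (Submodule.ne_bot_iff _).1 hL
  have hd' : L d = 0 := hd
  have h1 : ∑ i, d i = 0 := congrArg Prod.fst hd'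
  have h2 : ∀ j, ∑ i, d i * x i j = 0 := fun j => congrFun (congrArg Prod.snd hd') j
  have key : ∀ f : ι → ℝ, ∑ i, (if h : i ∈ F then d ⟨i, h⟩ else 0) * f i = ∑ i, d i * f i := by
    intro f
    rw [← Finset.sum_subset (Finset.subset_univ F), ← Finset.sum_coe_sort F]
    · simp
    · intro i _ hi
      simp [hi]
  refine ⟨fun i => if h : i ∈ F then d ⟨i, h⟩ else 0, ?_, ?_, ?_, ?_⟩
  · obtain ⟨i, hi⟩ := Function.ne_iff.1 hd0
    refine Function.ne_iff.2 ⟨i, ?_⟩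
    simpa using hi
  · intro i hi
    simp [hi]
  · simpa using (key 1).trans (by simpa using h1)
  · intro j
    exact (key _).trans (h2 j)

/-- An extreme point of the weight polytope of mass `|S| - 1 - m` has a zero coordinate in `S`, and the
corresponding index can be removed. Otherwise at least `m + 2` coordinates lie strictly between `0` and
`1`, and an affine relation among their vectors gives a segment through the extreme point. -/
lemma steinitz_step {ι : Type*} [Fintype ι] [DecidableEq ι] {m : ℕ} (x : ι → Fin m → ℝ)
    (S : Finset ι) (hS : m + 1 ≤ S.card)
    (hgood : (steinitzWeights x S (S.card - m)).Nonempty) :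
    ∃ i ∈ S, (steinitzWeights x (S.erase i) ((S.erase i).card - m)).Nonempty := by
  have hS' : (m : ℝ) + 1 ≤ S.card := by exact_mod_cast hS
  have hne : (steinitzWeights x S (S.card - 1 - m)).Nonempty := by
    obtain ⟨l, h1, h2, h3, h4⟩ := hgood
    have hc0 : 0 ≤ ((S.card : ℝ) - 1 - m) / (S.card - m) :=
      div_nonneg (by linarith) (by linarith)
    have hc1 : ((S.card : ℝ) - 1 - m) / (S.card - m) ≤ 1 := by
      rw [div_le_one (by linarith)]; linarith
    refine ⟨fun i => ((S.card : ℝ) - 1 - m) / (S.card - m) * l i, ?_, ?_, ?_, ?_⟩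
    · exact fun i => ⟨mul_nonneg hc0 (h1 i).1, mul_le_one₀ hc1 (h1 i).1 (h1 i).2⟩
    · intro i hi
      simp [h2 i hi]
    · rw [← Finset.mul_sum, h3]
      have : (S.card : ℝ) - m ≠ 0 := by linarith
      field_simp
    · intro j
      simp only [mul_assoc]
      rw [← Finset.mul_sum, h4 j, mul_zero]
  obtain ⟨l, hl⟩ := (isCompact_steinitzWeights x S _).extremePoints_nonempty hne
  rw [mem_extremePoints_iff_left] at hl
  obtain ⟨⟨h1, h2, h3, h4⟩, hext⟩ := hl
  by_cases hz : ∃ i ∈ S, l i = 0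
  · obtain ⟨i, hi, hli⟩ := hz
    refine ⟨i, hi, l, h1, ?_, ?_, h4⟩
    · intro k hk
      by_cases hki : k = i
      · rw [hki, hli]
      · exact h2 k fun h => hk (Finset.mem_erase.2 ⟨hki, h⟩)
    · rw [h3, Finset.card_erase_of_mem hi, Nat.cast_sub (by omega)]
      simp
  exfalso
  push Not at hz
  -- the coordinates strictly between `0` and `1`, as no coordinate in `S` vanishes
  set F := S.filter fun i => l i < 1 with hFdef
  have hsumF : ∑ i ∈ F, (1 - l i) = m + 1 := by
    have hA : ∑ i ∈ S, (1 - l i) = m + 1 := by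
      rw [Finset.sum_sub_distrib, Finset.sum_subset (f := l) (Finset.subset_univ S), h3]
      · simp only [Finset.sum_const, nsmul_eq_mul, mul_one]
        ring
      · intro i _ hi
        exact h2 i hi
    rw [← hA]
    refine Finset.sum_subset (Finset.filter_subset _ _) ?_
    intro i hi hiF
    have : ¬ l i < 1 := fun h => hiF (Finset.mem_filter.2 ⟨hi, h⟩)
    linarith [(h1 i).2]
  have hFpos : ∀ i ∈ F, 0 < l i ∧ l i < 1 := by
    intro i hi
    rw [hFdef, Finset.mem_filter] at hi
    exact ⟨lt_of_le_of_ne (h1 i).1 (hz i hi.1).symm, hi.2⟩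
  have hFne : F.Nonempty := by
    rw [Finset.nonempty_iff_ne_empty]
    intro h
    rw [h] at hsumF
    simp at hsumF
    linarith [(Nat.cast_nonneg m : (0 : ℝ) ≤ m)]
  have hFcard : m + 1 < F.card := by
    have : ∑ i ∈ F, (1 - l i) < ∑ i ∈ F, (1 : ℝ) :=
      Finset.sum_lt_sum_of_nonempty hFne fun i hi => by linarith [(hFpos i hi).1]
    rw [hsumF] at this
    simp at this
    exact_mod_cast this
  obtain ⟨d, hd0, hd1, hd2, hd3⟩ := exists_affine_relation x F hFcard
  obtain ⟨ε, hε, hεd⟩ : ∃ ε : ℝ, 0 < ε ∧ ∀ i ∈ F, ε * |d i| ≤ l i ∧ ε * |d i| ≤ 1 - l i := by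
    have hev : ∀ᶠ ε in nhdsWithin (0 : ℝ) (Set.Ioi 0),
        ∀ i ∈ F, ε * |d i| ≤ l i ∧ ε * |d i| ≤ 1 - l i := by
      rw [Filter.eventually_all_finset]
      intro i hi
      have ht : Filter.Tendsto (fun ε : ℝ => ε * |d i|) (nhdsWithin 0 (Set.Ioi 0)) (nhds 0) := by
        have : Filter.Tendsto (fun ε : ℝ => ε * |d i|) (nhds 0) (nhds (0 * |d i|)) :=
          Filter.Tendsto.mul_const _ Filter.tendsto_id
        rw [zero_mul] at this
        exact this.mono_left nhdsWithin_le_nhds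
      exact (ht.eventually_le_const (hFpos i hi).1).and
        (ht.eventually_le_const (by linarith [(hFpos i hi).2]))
    obtain ⟨ε, h, hε⟩ := (hev.and self_mem_nhdsWithin).exists
    exact ⟨ε, hε, h⟩
  have hmem : ∀ s : ℝ, |s| = 1 → (fun i => l i + s * ε * d i) ∈
      steinitzWeights x S (S.card - 1 - m) := by
    intro s hs
    refine ⟨?_, ?_, ?_, ?_⟩
    · intro i
      by_cases hi : i ∈ F
      · have habs : |s * ε * d i| = ε * |d i| := by
          rw [abs_mul, abs_mul, hs, one_mul, abs_of_pos hε]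
        have h5 := hεd i hi
        rw [← habs] at h5
        constructor
        · linarith [neg_abs_le (s * ε * d i)]
        · linarith [le_abs_self (s * ε * d i)]
      · simpa [hd1 i hi] using h1 i
    · intro i hi
      have : i ∉ F := fun h => hi (Finset.mem_filter.1 h).1
      simp [h2 i hi, hd1 i this]
    · rw [Finset.sum_add_distrib, ← Finset.mul_sum, hd2, h3]
      simp
    · intro j
      have : ∀ i, (l i + s * ε * d i) * x i j = l i * x i j + s * ε * (d i * x i j) := by
        intro i; ring
      simp only [this]
      rw [Finset.sum_add_distrib, ← Finset.mul_sum, hd3 j, h4 j]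
      simp
  have heq := hext _ (hmem 1 (by simp)) _ (hmem (-1) (by simp))
    ⟨1 / 2, 1 / 2, by norm_num, by norm_num, by norm_num, by
      ext i; simp; ring⟩
  apply hd0
  ext i
  have := congrFun heq i
  simp at this
  rcases this with h | h
  · exact absurd h hε.ne'
  · simpa using h

/-- Subtracting the vanishing weighted sum leaves the weights `1 - l i ≥ 0` of total mass `m`. -/
lemma abs_sum_le_of_steinitzWeights {ι : Type*} [Fintype ι] {m : ℕ} (x : ι → Fin m → ℝ)
    (R : ℝ) (hx : ∀ i j, |x i j| ≤ R) (S : Finset ι)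
    (hgood : (steinitzWeights x S (S.card - m)).Nonempty) (j : Fin m) :
    |∑ i ∈ S, x i j| ≤ m * R := by
  obtain ⟨l, h1, h2, h3, h4⟩ := hgood
  have hs : ∀ f : ι → ℝ, ∑ i ∈ S, l i * f i = ∑ i, l i * f i := by
    intro f
    refine Finset.sum_subset (Finset.subset_univ S) ?_
    intro i _ hi
    simp [h2 i hi]
  have hl : ∑ i ∈ S, l i = S.card - m := by
    rw [← h3]
    simpa using hs 1
  have : ∑ i ∈ S, x i j = ∑ i ∈ S, (1 - l i) * x i j := by
    simp only [sub_mul, one_mul]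
    rw [Finset.sum_sub_distrib, hs, h4 j, sub_zero]
  rw [this]
  calc |∑ i ∈ S, (1 - l i) * x i j| ≤ ∑ i ∈ S, |(1 - l i) * x i j| :=
        Finset.abs_sum_le_sum_abs _ _
    _ ≤ ∑ i ∈ S, (1 - l i) * R := by
        refine Finset.sum_le_sum fun i _ => ?_
        have h5 : 0 ≤ 1 - l i := by linarith [(h1 i).2]
        rw [abs_mul, abs_of_nonneg h5]
        exact mul_le_mul_of_nonneg_left (hx i j) h5
    _ = m * R := by
        rw [← Finset.sum_mul, Finset.sum_sub_distrib, hl]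
        simp

/-- If a property of finite sets survives the removal of a suitable element, then every set with the
property tops a chain of nonempty sets with the property, one for each positive cardinality. -/
lemma exists_chain_of_erase {ι : Type*} [DecidableEq ι] (P : Finset ι → Prop)
    (hP : ∀ S, P S → S.Nonempty → ∃ i ∈ S, P (S.erase i)) (n : ℕ) :
    ∀ S : Finset ι, S.card = n → P S →
      ∃ C : Finset (Finset ι), C.card = n ∧
        (∀ T ∈ C, P T ∧ T.Nonempty ∧ T ⊆ S) ∧ IsChain (· ⊆ ·) (C : Set (Finset ι)) := by
  induction n with
  | zero => exact fun S _ _ => ⟨∅, by simp, by simp, by simp⟩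
  | succ n ih =>
    intro S hS hPS
    have hSne : S.Nonempty := Finset.card_pos.1 (by omega)
    obtain ⟨i, hi, hPi⟩ := hP S hPS hSne
    obtain ⟨C, hC1, hC2, hC3⟩ := ih (S.erase i) (by rw [Finset.card_erase_of_mem hi]; omega) hPi
    have hnot : S ∉ C := fun h => (Finset.notMem_erase i S) ((hC2 S h).2.2 hi)
    refine ⟨insert S C, by rw [Finset.card_insert_of_notMem hnot, hC1], ?_, ?_⟩
    · intro T hT
      rcases Finset.mem_insert.1 hT with rfl | hT
      · exact ⟨hPS, hSne, subset_rfl⟩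
      · exact ⟨(hC2 T hT).1, (hC2 T hT).2.1, (hC2 T hT).2.2.trans (Finset.erase_subset _ _)⟩
    · rw [Finset.coe_insert]
      refine hC3.insert ?_
      intro T hT _
      exact Or.inr ((hC2 T hT).2.2.trans (Finset.erase_subset _ _))

/-- The Steinitz lemma for the sup-norm on `ℝ^m`, with the constant `m`. The ordering is given as the
chain `C` of the supports of its nonempty initial segments. -/
lemma steinitz_chain_s3 {ι : Type*} [Fintype ι] [DecidableEq ι] {m : ℕ} (x : ι → Fin m → ℝ)
    (R : ℝ) (hR : 0 ≤ R) (hx : ∀ i j, |x i j| ≤ R) (hsum : ∀ j, ∑ i, x i j = 0) :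
    ∃ C : Finset (Finset ι), C.card = Fintype.card ι ∧
      (∀ T ∈ C, T.Nonempty ∧ ∀ j, |∑ i ∈ T, x i j| ≤ m * R) ∧
      IsChain (· ⊆ ·) (C : Set (Finset ι)) := by
  obtain ⟨C, hC1, hC2, hC3⟩ := exists_chain_of_erase
    (fun S : Finset ι => S.card ≤ m ∨ (steinitzWeights x S (S.card - m)).Nonempty)
    (by
      intro S hS hne
      by_cases hSm : S.card ≤ m
      · obtain ⟨i, hi⟩ := hne
        exact ⟨i, hi, Or.inl ((Finset.card_erase_le).trans hSm)⟩
      · obtain ⟨i, hi, h⟩ := steinitz_step x S (by omega) (hS.resolve_left hSm)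
        exact ⟨i, hi, Or.inr h⟩)
    (Fintype.card ι) Finset.univ rfl (by
      by_cases hm : Fintype.card ι ≤ m
      · exact Or.inl hm
      · right
        have hm' : (m : ℝ) < Fintype.card ι := by exact_mod_cast not_le.1 hm
        have hpos : (0 : ℝ) < Fintype.card ι := lt_of_le_of_lt (Nat.cast_nonneg m) hm'
        refine ⟨fun _ => ((Fintype.card ι : ℝ) - m) / Fintype.card ι, ?_, ?_, ?_, ?_⟩
        · intro _
          refine ⟨div_nonneg (by linarith) hpos.le, ?_⟩
          rw [div_le_one hpos]
          linarith [(Nat.cast_nonneg m : (0 : ℝ) ≤ m)]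
        · simp
        · simp
          field_simp
        · intro j
          rw [← Finset.mul_sum, hsum j, mul_zero])
  refine ⟨C, hC1, fun T hT => ⟨(hC2 T hT).2.1, fun j => ?_⟩, hC3⟩
  rcases (hC2 T hT).1 with h | h
  · calc |∑ i ∈ T, x i j| ≤ ∑ i ∈ T, |x i j| := Finset.abs_sum_le_sum_abs _ _
      _ ≤ ∑ i ∈ T, R := Finset.sum_le_sum fun i _ => hx i j
      _ = T.card * R := by simp
      _ ≤ m * R := by gcongr
  · exact abs_sum_le_of_steinitzWeights x R hx T h j

/-! ### Decomposition into pieces -/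

lemma abs_entry_le {R C : Type*} [Fintype R] [Fintype C] (E : Matrix R C ℤ) (j : R) (c : C) :
    |(E j c : ℝ)| ≤ matNormInf E := by
  have h : (E j c).natAbs ≤ matNormInf E :=
    Finset.le_sup (f := fun p : R × C => (E p.1 p.2).natAbs) (Finset.mem_univ (j, c))
  rw [← Int.cast_abs, Int.abs_eq_natAbs]
  exact_mod_cast h

lemma abs_image_le {R C : Type*} [Fintype R] [Fintype C] (E : Matrix R C ℤ) (j : R) (w : C → ℝ)
    (hw : ∀ c, 0 ≤ w c) : |∑ c, (E j c : ℝ) * w c| ≤ matNormInf E * ∑ c, w c := by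
  rw [Finset.mul_sum]
  refine (Finset.abs_sum_le_sum_abs _ _).trans (Finset.sum_le_sum fun c _ => ?_)
  rw [abs_mul, abs_of_nonneg (hw c)]
  exact mul_le_mul_of_nonneg_right (abs_entry_le E j c) (hw c)

/-- The building blocks of mixed kernel elements: nonzero nonnegative vectors, integral on `I`, of
`ℓ₁`-norm at most `m + 1`, whose image under `E` is an integer vector with entries at most `m ‖E‖∞` in
absolute value. -/
def pieces {m : ℕ} {C : Type*} [Fintype C] (E : Matrix (Fin m) C ℤ) (I : Finset C) :
    Set (C → ℝ) :=
  {w | (∀ c, 0 ≤ w c) ∧ w ≠ 0 ∧ (∀ c ∈ I, ∃ z : ℤ, w c = z) ∧ ∑ c, w c ≤ m + 1 ∧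
    ∃ v : Fin m → ℤ, ∀ j, ∑ c, (E j c : ℝ) * w c = v j ∧ |v j| ≤ m * matNormInf E}

/-- A vector `a / p + r` with integral image, where `a / p` is a grid vector and `r` a rounding error,
is a sum of pieces: while `a` has more than `m (p - 1)` units of mass, a zero-sum subfamily of `m (p - 1)
+ 1` of them yields a piece to split off. -/
lemma grid_mem_closure_pieces {m : ℕ} {C : Type*} [Fintype C] (hm : 1 ≤ m)
    (E : Matrix (Fin m) C ℤ) (I : Finset C) (p : ℕ) [Fact p.Prime]
    (hpC : Fintype.card C ≤ p) (hpE : matNormInf E * Fintype.card C < p)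
    (r : C → ℝ) (hr0 : ∀ c, 0 ≤ r c) (hr1 : ∀ c, r c ≤ 1 / p) (hrI : ∀ c ∈ I, r c = 0) (n : ℕ) :
    ∀ a : C → ℕ, ∑ c, a c = n → (∀ c ∈ I, a c = 0) →
      (∀ j, ∃ z : ℤ, ∑ c, (E j c : ℝ) * (a c / p + r c) = z) →
      (fun c => (a c : ℝ) / p + r c) ∈ AddSubmonoid.closure (pieces E I) := by
  classical
  have hp : p.Prime := Fact.out
  have hp0 : (0 : ℝ) < p := by exact_mod_cast hp.pos
  have hm' : (1 : ℝ) ≤ m := by exact_mod_cast hm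
  induction n using Nat.strong_induction_on with
  | _ n ih =>
  intro a ha haI hint
  by_cases hn : n ≤ m * (p - 1)
  -- few units are left: the vector is zero or a single piece
  · by_cases hw0 : (fun c => (a c : ℝ) / p + r c) = 0
    · rw [hw0]
      exact zero_mem _
    apply AddSubmonoid.subset_closure
    have hnn : ∀ c, 0 ≤ (a c : ℝ) / p + r c := fun c => add_nonneg (by positivity) (hr0 c)
    have hsum : ∑ c, ((a c : ℝ) / p + r c) ≤ m + Fintype.card C / p := by
      rw [Finset.sum_add_distrib, ← Finset.sum_div]
      refine add_le_add ?_ ?_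
      · rw [div_le_iff₀ hp0]
        have : ∑ c, a c ≤ m * p := by
          rw [ha]
          exact hn.trans (Nat.mul_le_mul_left _ (Nat.sub_le _ _))
        exact_mod_cast this
      · calc ∑ c, r c ≤ ∑ _c : C, 1 / (p : ℝ) := Finset.sum_le_sum fun c _ => hr1 c
          _ = _ := by simp [div_eq_mul_inv]
    choose v hv using hint
    refine ⟨hnn, hw0, fun c hc => ⟨0, by simp [haI c hc, hrI c hc]⟩, ?_, v, fun j => ⟨hv j, ?_⟩⟩
    · refine hsum.trans ?_
      gcongr
      rw [div_le_one hp0]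
      exact_mod_cast hpC
    · have h1 := abs_image_le E j _ hnn
      rw [hv j] at h1
      have h2 : (matNormInf E : ℝ) * ∑ c, ((a c : ℝ) / p + r c) < m * matNormInf E + 1 := by
        calc (matNormInf E : ℝ) * ∑ c, ((a c : ℝ) / p + r c)
            ≤ matNormInf E * (m + Fintype.card C / p) := by gcongr
          _ = m * matNormInf E + (matNormInf E * Fintype.card C : ℝ) / p := by ring
          _ < m * matNormInf E + 1 := by
              gcongr
              rw [div_lt_one hp0]
              exact_mod_cast hpE
      -- `v j` is an integer, so the error below `1` caused by `r` is harmless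
      have h3 := h1.trans_lt h2
      have h4 : |v j| < m * matNormInf E + 1 := by exact_mod_cast h3
      omega
  · push Not at hn
    -- the type `Σ c, Fin (a c)` lists each column `c` with multiplicity `a c`
    have hcard : m * (p - 1) + 1 ≤ (Finset.univ : Finset (Σ c, Fin (a c))).card := by
      simp [ha]
      omega
    obtain ⟨T, -, hT⟩ := Finset.exists_subset_card_eq hcard
    obtain ⟨U, hUT, hUne, hU⟩ := exists_zeroSum_subset p m T (fun t j => E j t.1) (by omega)
    set b : C → ℕ := fun c => (U.filter fun t => t.1 = c).card with hb
    have hba : ∀ c, b c ≤ a c := by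
      intro c
      calc b c ≤ ((Finset.univ : Finset (Fin (a c))).image
              fun i => (⟨c, i⟩ : Σ c, Fin (a c))).card := by
            refine Finset.card_le_card ?_
            rintro ⟨c', i⟩ h
            obtain ⟨-, rfl⟩ := Finset.mem_filter.1 h
            simp
        _ ≤ a c := Finset.card_image_le.trans (by simp)
    have hsumf : ∀ f : C → ℝ, ∑ t ∈ U, f t.1 = ∑ c, f c * b c := by
      intro f
      rw [← Finset.sum_fiberwise (s := U) (g := fun t => t.1)]
      refine Finset.sum_congr rfl fun c _ => ?_
      rw [Finset.sum_congr rfl (g := fun _ => f c)]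
      · simp [hb, mul_comm]
      · intro t ht
        rw [(Finset.mem_filter.1 ht).2]
    have hsumb : ∑ c, b c = U.card := by
      have := hsumf 1
      simp at this
      exact_mod_cast this.symm
    have hUpos : 0 < U.card := hUne.card_pos
    choose k hk using hU
    have himg : ∀ j, ∑ c, (E j c : ℝ) * (b c / p) = k j := by
      intro j
      have h1 := hsumf fun c => (E j c : ℝ)
      have h2 : (∑ t ∈ U, (E j t.1 : ℝ)) = p * k j := by exact_mod_cast hk j
      simp only [← mul_div_assoc]
      rw [← Finset.sum_div, ← h1, h2]
      field_simp
    have hbnn : ∀ c, (0 : ℝ) ≤ b c / p := fun c => by positivity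
    have hbsum : ∑ c, (b c : ℝ) / p ≤ m := by
      rw [← Finset.sum_div, div_le_iff₀ hp0]
      have h1 : ∑ c, b c ≤ m * p := by
        rw [hsumb]
        have h2 : U.card ≤ m * (p - 1) + 1 := hT ▸ Finset.card_le_card hUT
        have h3 : m * (p - 1) + m = m * p := by
          obtain ⟨q, hq⟩ := Nat.exists_eq_succ_of_ne_zero hp.ne_zero
          rw [hq]; simp; ring
        omega
      exact_mod_cast h1
    have hbpiece : (fun c => (b c : ℝ) / p) ∈ pieces E I := by
      refine ⟨hbnn, ?_, ?_, by linarith, k, fun j => ⟨himg j, ?_⟩⟩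
      · intro h0
        have : ∑ c, b c = 0 := by
          refine Finset.sum_eq_zero fun c _ => ?_
          have := congrFun h0 c
          simpa [hp.ne_zero] using this
        omega
      · intro c hc
        refine ⟨0, ?_⟩
        have : b c = 0 := by have := hba c; have := haI c hc; omega
        simp [this]
      · have h1 := abs_image_le E j _ hbnn
        rw [himg j] at h1
        have h2 : |(k j : ℝ)| ≤ m * matNormInf E := by
          refine h1.trans ?_
          rw [mul_comm (m : ℝ)]
          gcongr
        exact_mod_cast h2
    have hsub : ∀ c, ((a c - b c : ℕ) : ℝ) = a c - b c := fun c => Nat.cast_sub (hba c)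
    have hrest := ih (∑ c, (a c - b c)) (by
        have h1 : ∑ c, (a c - b c) + ∑ c, b c = ∑ c, a c := by
          rw [← Finset.sum_add_distrib]
          exact Finset.sum_congr rfl fun c _ => Nat.sub_add_cancel (hba c)
        omega) (fun c => a c - b c) rfl (fun c hc => by simp [haI c hc]) (by
        intro j
        obtain ⟨z, hz⟩ := hint j
        refine ⟨z - k j, ?_⟩
        push_cast
        rw [← hz, ← himg j, ← Finset.sum_sub_distrib]
        refine Finset.sum_congr rfl fun c _ => ?_
        rw [hsub]
        ring)
    have hadd := add_mem (AddSubmonoid.subset_closure hbpiece) hrest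
    convert hadd using 1
    ext c
    simp only [Pi.add_apply, hsub]
    ring

lemma mem_closure_pieces {m : ℕ} {C : Type*} [Fintype C] (hm : 1 ≤ m)
    (E : Matrix (Fin m) C ℤ) (I : Finset C) (g : C → ℝ) (hg0 : ∀ c, 0 ≤ g c)
    (hgI : ∀ c ∈ I, ∃ z : ℤ, g c = z) (hEg : ∀ j, ∑ c, (E j c : ℝ) * g c = 0) :
    g ∈ AddSubmonoid.closure (pieces E I) := by
  classical
  obtain ⟨p, hpge, hp⟩ := Nat.exists_infinite_primes
    (Fintype.card C + matNormInf E * Fintype.card C + 1)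
  have : Fact p.Prime := ⟨hp⟩
  have hp0 : (0 : ℝ) < p := by exact_mod_cast hp.pos
  have hm' : (1 : ℝ) ≤ m := by exact_mod_cast hm
  have hgN : ∀ c ∈ I, ∃ z : ℕ, g c = z := by
    intro c hc
    obtain ⟨z, hz⟩ := hgI c hc
    have : 0 ≤ z := by have := hg0 c; rw [hz] at this; exact_mod_cast this
    refine ⟨z.toNat, ?_⟩
    rw [hz]
    exact_mod_cast (Int.toNat_of_nonneg this).symm
  choose! z hz using hgN
  set q : C → ℝ := fun c => if c ∈ I then 0 else g c with hq
  have hq0 : ∀ c, 0 ≤ q c := by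
    intro c
    simp only [hq]
    split_ifs
    exacts [le_rfl, hg0 c]
  have hunit : ∀ c ∈ I, (Pi.single c 1 : C → ℝ) ∈ pieces E I := by
    intro c _
    refine ⟨fun c' => ?_, by simp, fun c' _ => ?_, ?_, fun j => E j c, fun j => ⟨?_, ?_⟩⟩
    · by_cases h : c' = c
      · subst h; simp
      · simp [h]
    · by_cases h : c' = c
      · subst h; exact ⟨1, by simp⟩
      · exact ⟨0, by simp [h]⟩
    · simp
    · simp [Pi.single_apply]
    · have h1 := abs_entry_le E j c
      have h2 : (matNormInf E : ℝ) ≤ m * matNormInf E :=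
        le_mul_of_one_le_left (Nat.cast_nonneg _) hm'
      exact_mod_cast h1.trans h2
  have hqmem : q ∈ AddSubmonoid.closure (pieces E I) := by
    have hfl : ∀ c, (⌊p * q c⌋₊ : ℝ) / p ≤ q c := by
      intro c
      rw [div_le_iff₀ hp0, mul_comm (q c)]
      exact Nat.floor_le (mul_nonneg hp0.le (hq0 c))
    have hdec : ∀ c, (⌊p * q c⌋₊ : ℝ) / p + (q c - ⌊p * q c⌋₊ / p) = q c := fun c => by ring
    have := grid_mem_closure_pieces hm E I p (by omega) (by omega)
      (fun c => q c - ⌊p * q c⌋₊ / p) (fun c => by linarith [hfl c]) (fun c => by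
        have h1 := Nat.lt_floor_add_one (p * q c)
        have h2 : q c ≤ (⌊p * q c⌋₊ + 1) / p := by
          rw [le_div_iff₀ hp0, mul_comm]
          exact h1.le
        rw [add_div] at h2
        linarith) (fun c hc => by simp [hq, hc]) _ (fun c => ⌊p * q c⌋₊) rfl
      (fun c hc => by simp [hq, hc]) (by
        intro j
        simp only [hdec]
        refine ⟨-∑ c ∈ I, E j c * z c, ?_⟩
        have h1 : ∑ c, (E j c : ℝ) * q c + ∑ c ∈ I, (E j c : ℝ) * g c = 0 := by
          rw [← hEg j, ← Finset.sum_filter_add_sum_filter_not Finset.univ (· ∈ I)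
            (fun c => (E j c : ℝ) * g c), add_comm]
          congr 1
          · simp
          · rw [Finset.sum_filter]
            refine Finset.sum_congr rfl fun c _ => ?_
            by_cases hc : c ∈ I <;> simp [hq, hc]
        have h2 : ∑ c ∈ I, (E j c : ℝ) * g c = ∑ c ∈ I, (E j c : ℝ) * z c :=
          Finset.sum_congr rfl fun c hc => by rw [hz c hc]
        push_cast
        linarith)
    simpa only [hdec] using this
  have hdec : g = ∑ c ∈ I, z c • (Pi.single c 1 : C → ℝ) + q := by
    ext c
    by_cases hc : c ∈ I
    · simp [hq, hc, Finset.sum_apply, Pi.single_apply, hz c hc]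
    · simp [hq, hc, Finset.sum_apply, Pi.single_apply]
  rw [hdec]
  exact add_mem (sum_mem fun c hc => nsmul_mem (AddSubmonoid.subset_closure (hunit c hc)) _) hqmem

lemma exists_fin_decomposition {m : ℕ} {C : Type*} [Fintype C] (hm : 1 ≤ m)
    (E : Matrix (Fin m) C ℤ) (I : Finset C) (g : C → ℝ) (hg0 : ∀ c, 0 ≤ g c)
    (hgI : ∀ c ∈ I, ∃ z : ℤ, g c = z) (hEg : ∀ j, ∑ c, (E j c : ℝ) * g c = 0) :
    ∃ (K : ℕ) (w : Fin K → C → ℝ), (∀ k, w k ∈ pieces E I) ∧ ∑ k, w k = g := by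
  obtain ⟨s, hs, hsum⟩ := AddSubmonoid.exists_multiset_of_mem_closure
    (mem_closure_pieces hm E I g hg0 hgI hEg)
  induction s using Quotient.inductionOn with
  | _ l =>
  refine ⟨l.length, l.get, fun k => hs _ (by simp), ?_⟩
  rw [← hsum, ← List.sum_ofFn, List.ofFn_get]
  simp

/-! ### Pigeonhole on partial sums -/

/-- The norm bound for a nonnegative minimal element of the mixed kernel. -/
lemma nonneg_bound {m : ℕ} {C : Type*} [Fintype C]
    (E : Matrix (Fin m) C ℤ) (I : Finset C) (g : C → ℝ) (hg0 : ∀ c, 0 ≤ g c)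
    (hgI : ∀ c ∈ I, ∃ z : ℤ, g c = z) (hEg : ∀ j, ∑ c, (E j c : ℝ) * g c = 0)
    (hne : ∃ c ∈ I, g c ≠ 0)
    (hmin : ∀ y : C → ℝ, (∀ c, 0 ≤ y c) → (∀ c, y c ≤ g c) → (∀ c ∈ I, ∃ z : ℤ, y c = z) →
      (∀ j, ∑ c, (E j c : ℝ) * y c = 0) → y ≠ 0 → y = g) :
    ∑ c, g c ≤ (2 * (m : ℝ) ^ 2 * (matNormInf E : ℝ) + 1) ^ (m + 1) := by
  classical
  -- if `m = 0` or `matNormInf E = 0`, every unit vector lies in the kernel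
  by_cases hdeg : m = 0 ∨ matNormInf E = 0
  · obtain ⟨c, hc, hgc⟩ := hne
    have hE : ∀ j c, (E j c : ℝ) = 0 := by
      intro j c
      rcases hdeg with h | h
      · subst h; exact j.elim0
      · have := abs_entry_le E j c
        rw [h] at this
        simpa using this
    have h1 : (1 : ℝ) ≤ g c := by
      obtain ⟨z, hz⟩ := hgI c hc
      have h2 : 0 < g c := lt_of_le_of_ne (hg0 c) (Ne.symm hgc)
      rw [hz] at h2 ⊢
      have h3 : 0 < z := by exact_mod_cast h2
      exact_mod_cast h3
    have := hmin (Pi.single c 1) (fun c' => by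
        by_cases h : c' = c
        · subst h; simp
        · simp [h]) (fun c' => by
        by_cases h : c' = c
        · subst h; simpa using h1
        · simpa [h] using hg0 c') (fun c' _ => by
        by_cases h : c' = c
        · subst h; exact ⟨1, by simp⟩
        · exact ⟨0, by simp [h]⟩) (fun j => by simp [hE]) (by simp)
    rw [← this]
    rw [Finset.sum_pi_single']
    simp only [Finset.mem_univ, if_true]
    apply one_le_pow₀
    have : 0 ≤ 2 * (m : ℝ) ^ 2 * (matNormInf E : ℝ) := by positivity
    linarith
  push Not at hdeg
  have hm : 1 ≤ m := Nat.one_le_iff_ne_zero.2 hdeg.1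
  have hD : 1 ≤ matNormInf E := Nat.one_le_iff_ne_zero.2 hdeg.2
  obtain ⟨K, w, hw, hsum⟩ := exists_fin_decomposition hm E I g hg0 hgI hEg
  have hwv : ∀ k, ∃ v : Fin m → ℤ, ∀ j, ∑ c, (E j c : ℝ) * w k c = v j ∧
    |v j| ≤ m * matNormInf E := fun k => (hw k).2.2.2.2
  choose v hv using hwv
  have himg : ∀ (S : Finset (Fin K)) j,
      ∑ c, (E j c : ℝ) * (∑ k ∈ S, w k) c = ∑ k ∈ S, (v k j : ℝ) := by
    intro S j
    simp only [Finset.sum_apply, Finset.mul_sum]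
    rw [Finset.sum_comm]
    exact Finset.sum_congr rfl fun k _ => (hv k j).1
  have hnnS : ∀ (S : Finset (Fin K)) c, 0 ≤ (∑ k ∈ S, w k) c := by
    intro S c
    rw [Finset.sum_apply]
    exact Finset.sum_nonneg fun k _ => (hw k).1 c
  have hposS : ∀ S : Finset (Fin K), S.Nonempty → ∑ k ∈ S, w k ≠ 0 := by
    rintro S ⟨k, hk⟩ h0
    refine (hw k).2.1 (funext fun c => ?_)
    have h1 := congrFun h0 c
    rw [Finset.sum_apply] at h1
    exact (Finset.sum_eq_zero_iff_of_nonneg fun k _ => (hw k).1 c).1 h1 k hk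
  set B : ℕ := m * (m * matNormInf E) with hB
  have hK : K ≤ (2 * B + 1) ^ m := by
    by_contra hK
    push Not at hK
    obtain ⟨Ch, hCh1, hCh2, hCh3⟩ := steinitz_chain_s3 (fun k j => (v k j : ℝ)) (m * matNormInf E)
      (by positivity) (fun k j => by exact_mod_cast (hv k j).2) (fun j => by
        rw [← himg Finset.univ j, hsum, hEg j])
    have hbox : (Fintype.piFinset fun _ : Fin m => Finset.Icc (-(B : ℤ)) B).card < Ch.card := by
      rw [hCh1, Fintype.card_piFinset]
      have h1 : ((B : ℤ) + 1 - -B).toNat = 2 * B + 1 := by omega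
      simpa only [Int.card_Icc, Finset.prod_const, Finset.card_univ, Fintype.card_fin, h1]
        using hK
    obtain ⟨S, hS, T, hT, hST, heq⟩ := Finset.exists_ne_map_eq_of_card_lt_of_maps_to hbox
      (f := fun S => fun j => ∑ k ∈ S, v k j) (by
        intro S hS
        rw [Finset.mem_coe, Fintype.mem_piFinset]
        intro j
        have h1 := (hCh2 S hS).2 j
        have h2 : |∑ k ∈ S, v k j| ≤ (B : ℤ) := by
          rw [hB]; exact_mod_cast h1
        exact Finset.mem_Icc.2 (abs_le.1 h2))
    have key : ∀ S ∈ Ch, ∀ T ∈ Ch, S ≠ T → S ⊆ T →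
        (∀ j, ∑ k ∈ S, v k j = ∑ k ∈ T, v k j) → False := by
      intro S hS T hT hne hsub heq
      have hsd : (T \ S).Nonempty :=
        Finset.sdiff_nonempty.2 fun h => hne (Finset.Subset.antisymm hsub h)
      have hcompl : ∑ k ∈ T \ S, w k + ∑ k ∈ (T \ S)ᶜ, w k = g := by
        rw [Finset.sum_add_sum_compl, hsum]
      have hy := hmin (∑ k ∈ T \ S, w k) (hnnS _) (fun c => by
          have h1 := congrFun hcompl c
          have h2 := hnnS (T \ S)ᶜ c
          rw [Pi.add_apply] at h1
          linarith) (fun c hc => by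
          choose u hu using fun k => (hw k).2.2.1 c hc
          refine ⟨∑ k ∈ T \ S, u k, ?_⟩
          rw [Finset.sum_apply]
          push_cast
          exact Finset.sum_congr rfl fun k _ => hu k) (fun j => by
          rw [himg]
          have h1 := Finset.sum_sdiff (f := fun k => v k j) hsub
          have h2 : ∑ k ∈ T \ S, v k j = 0 := by have := heq j; omega
          exact_mod_cast h2) (hposS _ hsd)
      rw [hy] at hcompl
      refine hposS (T \ S)ᶜ ?_ (by simpa using hcompl)
      obtain ⟨k, hk⟩ := (hCh2 S hS).1
      exact ⟨k, by simp [hk]⟩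
    rcases hCh3 hS hT hST with h | h
    · exact key S hS T hT hST h fun j => congrFun heq j
    · exact key T hT S hS hST.symm h fun j => (congrFun heq j).symm
  have hmR : (1 : ℝ) ≤ m := by exact_mod_cast hm
  have hDR : (1 : ℝ) ≤ matNormInf E := by exact_mod_cast hD
  have hKR : (K : ℝ) ≤ (2 * (m : ℝ) ^ 2 * (matNormInf E : ℝ) + 1) ^ m := by
    have : (K : ℝ) ≤ (2 * (m * (m * matNormInf E)) + 1) ^ m := by exact_mod_cast hK
    convert this using 2
    ring
  calc ∑ c, g c = ∑ k, ∑ c, w k c := by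
        rw [Finset.sum_comm, ← hsum]
        simp [Finset.sum_apply]
    _ ≤ ∑ _k : Fin K, ((m : ℝ) + 1) := Finset.sum_le_sum fun k _ => (hw k).2.2.2.1
    _ = K * (m + 1) := by simp [mul_add]
    _ ≤ (2 * (m : ℝ) ^ 2 * (matNormInf E : ℝ) + 1) ^ m *
          (2 * (m : ℝ) ^ 2 * (matNormInf E : ℝ) + 1) := by
        gcongr
        nlinarith [mul_le_mul hmR hDR zero_le_one (by linarith : (0 : ℝ) ≤ m)]
    _ = _ := (pow_succ _ _).symm

/-! ### Sign flips and circuits -/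

/-- The norm bound for the elements of the mixed Graver basis with nonzero integral part. -/
lemma graver_bound {m N : ℕ} (E : Matrix (Fin m) (Fin N) ℤ)
    (I : Finset (Fin N)) (g : Fin N → ℝ) (hg : MixedKer E I g) (hne : ∃ i ∈ I, g i ≠ 0)
    (hmin : ∀ y, MixedKer E I y → y ≠ 0 → y ≠ g → ¬ ConformalTo y g) :
    vnorm1 g ≤ (2 * (m : ℝ) ^ 2 * (matNormInf E : ℝ) + 1) ^ (m + 1) := by
  -- the signs of `g`; at zero coordinates the choice is immaterial
  set s : Fin N → ℤ := fun c => if 0 ≤ g c then 1 else -1 with hs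
  have hss : ∀ c, (s c : ℝ) * s c = 1 := by
    intro c
    simp only [hs]
    split_ifs <;> simp
  have hsz : ∀ c, s c = 1 ∨ s c = -1 := by
    intro c
    simp only [hs]
    split_ifs <;> simp
  have hsg : ∀ c, (s c : ℝ) * g c = |g c| := by
    intro c
    simp only [hs]
    split_ifs with h
    · simp [abs_of_nonneg h]
    · simp [abs_of_neg (not_le.1 h)]
  have hgs : ∀ c, (s c : ℝ) * |g c| = g c := by
    intro c
    rw [← hsg, ← mul_assoc, hss, one_mul]
  have hnorm : matNormInf (Matrix.of fun j c => E j c * s c) = matNormInf E := by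
    unfold matNormInf
    congr 1
    ext ⟨j, c⟩
    rcases hsz c with h | h <;> simp [h]
  have hker : ∀ y : Fin N → ℝ, (∀ j, ∑ c, ((E j c * s c : ℤ) : ℝ) * y c = 0) ↔
      (E.map (Int.cast : ℤ → ℝ)).mulVec (fun c => s c * y c) = 0 := by
    intro y
    rw [funext_iff]
    refine forall_congr' fun j => ?_
    simp [Matrix.mulVec, dotProduct, mul_assoc]
  have hint : ∀ (y : Fin N → ℝ) c, (∃ z : ℤ, y c = z) → ∃ z : ℤ, s c * y c = z := by
    rintro y c ⟨z, hz⟩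
    exact ⟨s c * z, by rw [hz]; push_cast; rfl⟩
  have hmain := nonneg_bound (Matrix.of fun j c => E j c * s c) I (fun c => |g c|)
    (fun c => abs_nonneg _)
    (fun c hc => by
      obtain ⟨z, hz⟩ := hg.2 c hc
      exact ⟨|z|, by rw [hz]; simp⟩)
    ((hker _).2 (by simpa only [hgs] using hg.1))
    (by
      obtain ⟨i, hi, h⟩ := hne
      exact ⟨i, hi, by simpa using h⟩)
    (by
      intro y hy0 hyg hyI hEy hyne
      by_contra hcon
      have habs : ∀ c, |(s c : ℝ)| = 1 := by
        intro c
        rcases hsz c with h | h <;> simp [h]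
      refine hmin (fun c => s c * y c) ⟨(hker y).1 hEy, fun c hc => hint y c (hyI c hc)⟩
        ?_ ?_ ?_
      · intro h0
        apply hyne
        ext c
        have h1 : (s c : ℝ) * y c = 0 := congrFun h0 c
        have h2 := congrArg abs h1
        rw [abs_mul, habs, one_mul] at h2
        simpa using h2
      · intro h0
        apply hcon
        ext c
        have h1 : (s c : ℝ) * y c = g c := congrFun h0 c
        rw [← h1, abs_mul, habs, one_mul, abs_of_nonneg (hy0 c)]
      · intro c
        constructor
        · rw [abs_mul, habs, one_mul, abs_of_nonneg (hy0 c)]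
          exact hyg c
        · have : (s c : ℝ) * y c * g c = y c * |g c| := by rw [← hsg]; ring
          rw [this]
          exact mul_nonneg (hy0 c) (abs_nonneg _))
  rw [hnorm] at hmain
  exact hmain

/-- A circuit is conformally minimal among the nonzero integral kernel elements. -/
lemma circuit_minimal_s3 {m : ℕ} {C : Type*} [Fintype C] (A : Matrix (Fin m) C ℤ) (g : C → ℤ)
    (hg : IsCircuit A g) (y : C → ℤ) (hy0 : y ≠ 0) (hAy : A.mulVec y = 0)
    (hle : ∀ c, |y c| ≤ |g c|) (hsgn : ∀ c, 0 ≤ y c * g c) : y = g := by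
  classical
  obtain ⟨hg0, hAg, hgcd, hmin⟩ := hg
  obtain ⟨c₀, hc₀⟩ := Function.ne_iff.1 hy0
  have hyc₀ : y c₀ ≠ 0 := hc₀
  have hgc₀ : g c₀ ≠ 0 := by
    intro h
    have := hle c₀
    rw [h] at this
    exact hyc₀ (by simpa using this)
  -- the combination `g c₀ • y - y c₀ • g` lies in the kernel and its support misses `c₀`
  set d : C → ℤ := fun c => g c₀ * y c - y c₀ * g c with hd
  have hAd : A.mulVec d = 0 := by
    have : d = g c₀ • y - y c₀ • g := by ext c; simp [hd]
    rw [this, Matrix.mulVec_sub, Matrix.mulVec_smul, Matrix.mulVec_smul, hAy, hAg]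
    simp
  have hd0 : d = 0 := by
    by_contra hdne
    refine hmin (fun c => (d c : ℝ)) ?_ ?_ ?_
    · intro h
      apply hdne
      ext c
      have := congrFun h c
      simpa using this
    · ext j
      have := congrFun hAd j
      simp only [Matrix.mulVec, dotProduct, Pi.zero_apply, Matrix.map_apply] at this ⊢
      exact_mod_cast this
    · rw [Set.ssubset_iff_of_subset]
      · refine ⟨c₀, by simpa using hgc₀, ?_⟩
        simp [hd, mul_comm]
      · intro c hc
        simp only [Function.mem_support, ne_eq, Int.cast_eq_zero] at hc ⊢
        intro h
        have h1 := hle c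
        rw [h] at h1
        have h2 : y c = 0 := by simpa using h1
        exact hc (by simp [hd, h, h2])
  have hprop : ∀ c, g c₀ * y c = y c₀ * g c := fun c => by
    have := congrFun hd0 c
    simp only [hd, Pi.zero_apply] at this
    linarith
  -- coprimality of the entries of `g` turns proportionality into divisibility
  have hdvd : (g c₀).natAbs ∣ (y c₀).natAbs := by
    have h1 : (g c₀).natAbs ∣ Finset.univ.gcd fun c => (y c₀).natAbs * (g c).natAbs := by
      refine Finset.dvd_gcd fun c _ => ?_
      rw [← Int.natAbs_mul, ← hprop c, Int.natAbs_mul]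
      exact dvd_mul_right _ _
    rw [Finset.gcd_mul_left, hgcd] at h1
    simpa using h1
  have habs : |y c₀| = |g c₀| := by
    refine le_antisymm (hle c₀) ?_
    rw [Int.abs_eq_natAbs, Int.abs_eq_natAbs]
    exact_mod_cast Nat.le_of_dvd (Int.natAbs_pos.2 hyc₀) hdvd
  have heq : y c₀ = g c₀ := by
    rcases abs_eq_abs.1 habs with h | h
    · exact h
    · have h1 := hsgn c₀
      rw [h] at h1
      nlinarith [sq_nonneg (g c₀), mul_self_pos.2 hgc₀]
  ext c
  have := hprop c
  rw [heq] at this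
  exact mul_left_cancel₀ hgc₀ this

/-- every element of the mixed Graver basis satisfies
`‖g‖₁ ≤ (2m²‖E‖∞ + 1)^(m+1)`. -/
theorem mixedGraver_norm1_bound_improved (m N : ℕ) (E : Matrix (Fin m) (Fin N) ℤ)
    (I : Finset (Fin N)) (g : Fin N → ℝ) (hg : InMixedGraver E I g) :
    vnorm1 g ≤ (2 * (m : ℝ) ^ 2 * (matNormInf E : ℝ) + 1) ^ (m + 1) := by
  rcases hg with ⟨hker, hne, hmin⟩ | ⟨hI, gz, hgz, hcirc⟩
  · exact graver_bound E I g hker hne hmin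
  have hsplit : ∀ (u : Fin N → ℝ), (∀ i ∈ I, u i = 0) → ∀ j,
      (E.map (Int.cast : ℤ → ℝ)).mulVec u j =
        ∑ i : {i : Fin N // i ∉ I}, (E j i.1 : ℝ) * u i.1 := by
    intro u hu j
    simp only [Matrix.mulVec, dotProduct, Matrix.map_apply]
    rw [← Fintype.sum_subtype_add_sum_subtype (· ∈ I), Finset.sum_eq_zero, zero_add]
    rintro ⟨i, hi⟩ _
    rw [hu i hi, mul_zero]
  have hAg : ∀ j, ∑ i : {i : Fin N // i ∉ I}, E j i.1 * gz i = 0 := fun j =>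
    congrFun hcirc.2.1 j
  refine graver_bound E Finset.univ g ⟨?_, ?_⟩ ?_ ?_
  · ext j
    rw [hsplit g hI j, Pi.zero_apply]
    simp only [hgz]
    exact_mod_cast hAg j
  · intro i _
    by_cases hi : i ∈ I
    · exact ⟨0, by simp [hI i hi]⟩
    · exact ⟨gz ⟨i, hi⟩, hgz ⟨i, hi⟩⟩
  · obtain ⟨i, hi⟩ := Function.ne_iff.1 hcirc.1
    have hi' : gz i ≠ 0 := hi
    exact ⟨i.1, Finset.mem_univ _, by rw [hgz i]; exact_mod_cast hi'⟩
  · rintro y ⟨hEy, hyint⟩ hy0 hyg hconf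
    have hyI : ∀ i ∈ I, y i = 0 := by
      intro i hi
      have := (hconf i).1
      rw [hI i hi] at this
      simpa using this
    choose yz hyz using fun i => hyint i (Finset.mem_univ i)
    have heq := circuit_minimal_s3 _ gz hcirc (fun i => yz i.1)
      (by
        intro h0
        apply hy0
        ext i
        by_cases hi : i ∈ I
        · exact hyI i hi
        · have h1 : yz i = 0 := congrFun h0 ⟨i, hi⟩
          rw [hyz i, h1]
          simp)
      (by
        ext j
        have h1 := congrFun hEy j
        rw [hsplit y hyI j] at h1
        simp only [hyz, Pi.zero_apply] at h1
        have h2 : ∑ i : {i : Fin N // i ∉ I}, E j i.1 * yz i.1 = 0 := by exact_mod_cast h1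
        exact h2)
      (by
        intro i
        have h1 := (hconf i.1).1
        rw [hyz, hgz] at h1
        exact_mod_cast h1)
      (by
        intro i
        have h1 := (hconf i.1).2
        rw [hyz, hgz] at h1
        exact_mod_cast h1)
    apply hyg
    ext i
    by_cases hi : i ∈ I
    · rw [hyI i hi, hI i hi]
    · rw [hyz i, hgz ⟨i, hi⟩, ← heq]
end

section
/- (MIP Proximity) Consider a mixed-integer program with integer m×N constraint matrix E, integral coordinates I ⊆ [N], and separable convex objective f. Let p ∈ [1, ∞], and let W ≥ 0 be such that every element of ker_X(E) admits a one-fat decomposition whose fat element h satisfies ‖h‖_p ≤ W. Suppose z* ∈ ℤ^N is an integral optimum of the program, and x* is a mixed optimum such that ‖z* − x*‖_p is minimal among all mixed optima. Then ‖z* − x*‖_p ≤ W. -/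
/-!
Write `x = z + v` with `v = x - z` in the mixed kernel, and let `v = h + g` be a one-fat
decomposition with `‖h‖ ≤ W`. By conformality both `z + h` and `z + g` lie coordinatewise between
`z` and `x`, so `z + h` is feasible and `z + g` is an integral feasible point. Separable convexity
gives `f (z + h) + f (z + g) ≤ f z + f x` (`convexOn_add_le_of_smul`), and `f z ≤ f (z + g)` by
integral optimality of `z`; hence `f (z + h) ≤ f x`, i.e. `z + h` is a mixed optimum. Its distance
to `z` is `‖h‖ ≤ W`, and `x` is at least as close.
-/

open Matrix BigOperators

/-- In each coordinate, a conformal decomposition `v = h + g` splits `v` in proportions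
`t` and `1 - t`. -/
lemma exists_proportion {v h g : ℝ} (hv : v = h + g) (hh : |h| ≤ |v| ∧ 0 ≤ h * v)
    (hg : |g| ≤ |v| ∧ 0 ≤ g * v) :
    ∃ t : ℝ, 0 ≤ t ∧ t ≤ 1 ∧ h = t * v ∧ g = (1 - t) * v := by
  by_cases h0 : v = 0
  · have h1 : h = 0 := by simpa [h0] using hh.1
    have h2 : g = 0 := by simpa [h0] using hg.1
    exact ⟨0, le_rfl, zero_le_one, by simp [h1], by simp [h2, h0]⟩
  · have hpos : 0 < v * v := mul_self_pos.mpr h0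
    have e1 : h / v = h * v / (v * v) := by field_simp
    have e2 : 1 - h / v = g * v / (v * v) := by
      rw [hv] at h0 ⊢
      field_simp
      ring
    refine ⟨h / v, ?_, ?_, ?_, ?_⟩
    · rw [e1]; exact div_nonneg hh.2 hpos.le
    · have : 0 ≤ 1 - h / v := by rw [e2]; exact div_nonneg hg.2 hpos.le
      linarith
    · field_simp
    · rw [e2]; field_simp

lemma convexOn_add_le_of_smul {f : ℝ → ℝ} (hf : ConvexOn ℝ Set.univ f) (a v t : ℝ)
    (ht0 : 0 ≤ t) (ht1 : t ≤ 1) :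
    f (a + t * v) + f (a + (1 - t) * v) ≤ f a + f (a + v) := by
  have h1 := hf.2 (Set.mem_univ a) (Set.mem_univ (a + v)) (sub_nonneg.mpr ht1) ht0 (by ring)
  have h2 := hf.2 (Set.mem_univ a) (Set.mem_univ (a + v)) ht0 (sub_nonneg.mpr ht1) (by ring)
  simp only [smul_eq_mul] at h1 h2
  rw [show (1 - t) * a + t * (a + v) = a + t * v by ring] at h1
  rw [show t * a + (1 - t) * (a + v) = a + (1 - t) * v by ring] at h2
  linarith

lemma add_mul_mem_Icc {a v t lo hi : ℝ} (ht0 : 0 ≤ t) (ht1 : t ≤ 1)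
    (ha : lo ≤ a ∧ a ≤ hi) (hav : lo ≤ a + v ∧ a + v ≤ hi) :
    lo ≤ a + t * v ∧ a + t * v ≤ hi := by
  constructor <;> nlinarith

/-- MIP Proximity: if every mixed-kernel element has a one-fat
decomposition with fat element of `ℓ_p`-norm at most `W`, then an integral optimum `z`
and a nearest (in `ℓ_p`-norm) mixed optimum `x` satisfy `‖z - x‖_p ≤ W`. -/
theorem mip_proximity (m N : ℕ) (E : Matrix (Fin m) (Fin N) ℤ) (I : Finset (Fin N))
    (f : Fin N → ℝ → ℝ) (hf : ∀ i, ConvexOn ℝ Set.univ (f i))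
    (b : Fin m → ℝ) (l u : Fin N → ℝ)
    (p : ENNReal) [Fact (1 ≤ p)] (W : ℝ) (hW : 0 ≤ W)
    (hWdecomp : ∀ v : Fin N → ℝ, MixedKer E I v →
      ∃ h g : Fin N → ℝ, OneFatDecomp E I v h g ∧
        ‖(WithLp.equiv p (Fin N → ℝ)).symm h‖ ≤ W)
    (Feas : (Fin N → ℝ) → Prop)
    (hFeas : Feas = fun y => (E.map (Int.cast : ℤ → ℝ)).mulVec y = b ∧
      l ≤ y ∧ y ≤ u ∧ ∀ i ∈ I, ∃ w : ℤ, y i = w)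
    (z : Fin N → ℤ) (hzfeas : Feas fun i => (z i : ℝ))
    (hzopt : ∀ y : Fin N → ℤ, (Feas fun i => (y i : ℝ)) →
      ∑ i, f i (z i) ≤ ∑ i, f i (y i))
    (x : Fin N → ℝ) (hxfeas : Feas x)
    (hxopt : ∀ y, Feas y → ∑ i, f i (x i) ≤ ∑ i, f i (y i))
    (hxnearest : ∀ y, Feas y → (∀ y', Feas y' → ∑ i, f i (y i) ≤ ∑ i, f i (y' i)) →
      ‖(WithLp.equiv p (Fin N → ℝ)).symm ((fun i => (z i : ℝ)) - x)‖ ≤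
        ‖(WithLp.equiv p (Fin N → ℝ)).symm ((fun i => (z i : ℝ)) - y)‖) :
    ‖(WithLp.equiv p (Fin N → ℝ)).symm ((fun i => (z i : ℝ)) - x)‖ ≤ W := by
  subst hFeas
  obtain ⟨hzE, hzl, hzu, -⟩ := hzfeas
  obtain ⟨hxE, hxl, hxu, hxI⟩ := hxfeas
  set zr : Fin N → ℝ := fun i => (z i : ℝ) with hzr
  have hker : MixedKer E I (x - zr) := by
    refine ⟨by rw [Matrix.mulVec_sub, hxE, hzE, sub_self], fun i hi => ?_⟩
    obtain ⟨w, hw⟩ := hxI i hi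
    exact ⟨w - z i, by simp [hw, hzr]⟩
  obtain ⟨h, g, ⟨hsum, hch, hcg, ⟨hhE, hhI⟩, hgE, hgI⟩, hnorm⟩ := hWdecomp _ hker
  choose t ht0 ht1 hth htg using fun i =>
    exists_proportion (congrFun hsum i) (hch i) (hcg i)
  choose gz hgz using hgI
  have hx : ∀ i, zr i + (x - zr) i = x i := fun i => by simp
  have hbh : ∀ i, l i ≤ zr i + h i ∧ zr i + h i ≤ u i := fun i => by
    rw [hth i]
    exact add_mul_mem_Icc (ht0 i) (ht1 i) ⟨hzl i, hzu i⟩ (by rw [hx]; exact ⟨hxl i, hxu i⟩)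
  have hbg : ∀ i, l i ≤ zr i + g i ∧ zr i + g i ≤ u i := fun i => by
    rw [htg i]
    exact add_mul_mem_Icc (sub_nonneg.mpr (ht1 i)) (by linarith [ht0 i]) ⟨hzl i, hzu i⟩
      (by rw [hx]; exact ⟨hxl i, hxu i⟩)
  have hgopt : ∑ i, f i (zr i) ≤ ∑ i, f i (zr i + g i) := by
    have hcast : (fun i => ((z i + gz i : ℤ) : ℝ)) = zr + g := by
      funext i; simp [hzr, hgz i]
    have key := hzopt (fun i => z i + gz i) (by
      change _ ∧ _
      rw [hcast]
      refine ⟨by rw [Matrix.mulVec_add, hzE, hgE, add_zero], fun i => (hbg i).1,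
        fun i => (hbg i).2, fun i _ => ⟨z i + gz i, (congrFun hcast i).symm⟩⟩)
    simpa [hzr, hgz] using key
  have hconv : ∑ i, f i (zr i + h i) + ∑ i, f i (zr i + g i)
      ≤ ∑ i, f i (zr i) + ∑ i, f i (x i) := by
    rw [← Finset.sum_add_distrib, ← Finset.sum_add_distrib]
    refine Finset.sum_le_sum fun i _ => ?_
    have := convexOn_add_le_of_smul (hf i) (zr i) ((x - zr) i) (t i) (ht0 i) (ht1 i)
    rwa [← hth i, ← htg i, hx i] at this
  refine (hxnearest (zr + h) ?_ ?_).trans ?_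
  · refine ⟨by rw [Matrix.mulVec_add, hzE, hhE, add_zero], fun i => (hbh i).1,
      fun i => (hbh i).2, fun i hi => ?_⟩
    obtain ⟨w, hw⟩ := hhI i hi
    exact ⟨z i + w, by simp [hw, hzr]⟩
  · intro y hy
    have h1 := hxopt y hy
    simp only [Pi.add_apply]
    linarith
  · have hneg : (WithLp.equiv p (Fin N → ℝ)).symm (zr - (zr + h))
        = -(WithLp.equiv p (Fin N → ℝ)).symm h := by
      rw [sub_add_cancel_left]; rfl
    rw [hneg, norm_neg]
    exact hnorm
end

section
/- Let f(x) = Σ_{i=1}^N f_i(x_i) where each f_i : ℝ → ℝ is convex, and let x, y₁, y₂ ∈ ℝ^N be such that y₁ and y₂ lie in the same orthant, i.e., (y₁)_i · (y₂)_i ≥ 0 for every i ∈ [N]. Then f(x + y₁ + y₂) − f(x + y₁) ≥ f(x + y₂) − f(x). -/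
open BigOperators

/-!
The inequality splits into one inequality per coordinate. In one variable, if `a` and `b` have the
same sign, then `x + a` and `x + b` lie between `x` and `x + a + b` and are mirror images of each
other: with `t = a / (a + b)` they are the convex combinations of the end points with weights
`(1 - t, t)` and `(t, 1 - t)`. Adding the two convexity inequalities gives
`g (x + a) + g (x + b) ≤ g x + g (x + a + b)`, which is `ConvexOn.add_le_add_of_mul_nonneg`.
-/

theorem ConvexOn.add_le_add_of_mul_nonneg {g : ℝ → ℝ} (hg : ConvexOn ℝ Set.univ g)
    {x a b : ℝ} (hab : 0 ≤ a * b) :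
    g (x + a) + g (x + b) ≤ g x + g (x + a + b) := by
  by_cases hs : a + b = 0
  · -- Opposite numbers of the same sign both vanish.
    have ha : a = 0 := by nlinarith [sq_nonneg a]
    have hb : b = 0 := by linarith
    simp [ha, hb]
  · have ht : 0 ≤ a / (a + b) := by
      rw [← mul_div_mul_right a (a + b) hs]
      exact div_nonneg (by nlinarith [sq_nonneg a]) (mul_self_nonneg _)
    have hu : 0 ≤ b / (a + b) := by
      rw [← mul_div_mul_right b (a + b) hs]
      exact div_nonneg (by nlinarith [sq_nonneg b]) (mul_self_nonneg _)
    have htu : a / (a + b) + b / (a + b) = 1 := by rw [← add_div, div_self hs]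
    have h₁ := hg.2 (Set.mem_univ x) (Set.mem_univ (x + a + b)) hu ht (by linarith)
    have h₂ := hg.2 (Set.mem_univ x) (Set.mem_univ (x + a + b)) ht hu htu
    have e₁ : (b / (a + b)) • x + (a / (a + b)) • (x + a + b) = x + a := by
      simp only [smul_eq_mul]
      field_simp
      ring
    have e₂ : (a / (a + b)) • x + (b / (a + b)) • (x + a + b) = x + b := by
      simp only [smul_eq_mul]
      field_simp
      ring
    rw [e₁] at h₁
    rw [e₂] at h₂
    simp only [smul_eq_mul] at h₁ h₂
    have hu' : b / (a + b) = 1 - a / (a + b) := by linarith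
    rw [hu'] at h₁ h₂
    linarith

/-- superadditivity of separable convex functions along two vectors
from the same orthant. -/
theorem sepConvex_superadditive (N : ℕ) (f : Fin N → ℝ → ℝ)
    (hf : ∀ i, ConvexOn ℝ Set.univ (f i))
    (x y₁ y₂ : Fin N → ℝ) (horthant : ∀ i, 0 ≤ y₁ i * y₂ i) :
    (∑ i, f i (x i + y₂ i)) - (∑ i, f i (x i)) ≤
      (∑ i, f i (x i + y₁ i + y₂ i)) - (∑ i, f i (x i + y₁ i)) := by
  rw [← Finset.sum_sub_distrib, ← Finset.sum_sub_distrib]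
  refine Finset.sum_le_sum fun i _ => ?_
  linarith [(hf i).add_le_add_of_mul_nonneg (x := x i) (horthant i)]
end

section
/- There exists a function h : ℕ⁴ → ℕ such that the following holds. Let E be a 2-stage stochastic matrix with n blocks and block dimensions r, s, t, and let I be any subset of its columns designated integral. Then every element g of the mixed Graver basis G_X(E) satisfies ‖g‖∞ ≤ h(r, s, t, ‖E‖∞), i.e., the maximum ∞-norm of a mixed Graver basis element is bounded by a function of the block dimensions and ‖E‖∞ alone, independently of the number n of blocks. -/
/-!
The bound comes from a reduction to boundedly many blocks.

* `exists_basic`: every vector `y` can be replaced, without changing its image under a given linear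
  map `f`, by a vector `a * y` with `0 ≤ a ≤ 2 ^ |C|` on whose support `f` is injective. (A kernel
  vector supported on `supp y` is subtracted in the multiple that cancels a coordinate of maximal
  relative size; this at most doubles each coordinate and shrinks the support.)
* `exists_integral_direction`: a kernel vector of a fixed integer matrix with a large coordinate `j`
  dominates `K` times an integral kernel vector that is nonzero at `j` and of bounded size. This is
  `exists_basic` with the coordinate `j` kept fixed: the basic vector then spans the line of kernel
  vectors on its support, so it is a multiple of one of finitely many integral vectors.

Let `g = (x, y₁, …, yₙ)` be in the kernel of the 2-stage matrix. Replacing each `yᵢ` by a basic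
solution of `Bᵢ y = -Aᵢ x`, the result depends only on `x`, the block `(Aᵢ, Bᵢ)` and the support.
Hence there are only boundedly many distinct `yᵢ`, and the blocks can be merged into a matrix from
a finite list. If `x` has a large coordinate, the second lemma for this matrix yields a nonzero
bounded integral kernel vector conformal to `g`. If `x` is bounded but some `yᵢ` is large, the
second lemma for `(Aᵢ Bᵢ)` with `K > ‖x‖∞` yields such a vector supported on the local columns of
block `i`. Mixed Graver elements of either kind admit no integral nonzero conformal
kernel vector other than themselves, so they are bounded.
-/

open Matrix BigOperators

/-! ### Basic solutions and integral directions -/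

/-- Basic solutions: the fibre of `f` through `y` contains a vector `a * y`, with
`0 ≤ a ≤ 2 ^ |C|`, such that `f` is injective on vectors supported on `supp (a * y)`. -/
theorem exists_basic {C V : Type*} [Fintype C] [AddCommGroup V] [Module ℝ V]
    (f : (C → ℝ) →ₗ[ℝ] V) (y : C → ℝ) :
    ∃ a : C → ℝ, (∀ i, 0 ≤ a i ∧ a i ≤ 2 ^ Fintype.card C) ∧
      f (fun i => a i * y i) = f y ∧
      ∀ z, f z = 0 → (∀ i, a i * y i = 0 → z i = 0) → z = 0 := by
  classical
  suffices H : ∀ (m : ℕ) (y : C → ℝ), (Finset.univ.filter fun i => y i ≠ 0).card ≤ m →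
      ∃ a : C → ℝ, (∀ i, 0 ≤ a i ∧ a i ≤ 2 ^ m) ∧ f (fun i => a i * y i) = f y ∧
        ∀ z, f z = 0 → (∀ i, a i * y i = 0 → z i = 0) → z = 0 from
    H _ y (Finset.card_le_univ _)
  intro m
  induction m with
  | zero =>
    intro y hy
    have hy0 : ∀ i, y i = 0 := by
      intro i
      by_contra hi
      have : i ∈ Finset.univ.filter fun i => y i ≠ 0 := by simp [hi]
      rw [Finset.card_eq_zero.mp (Nat.le_zero.mp hy)] at this
      simp at this
    refine ⟨fun _ => 1, fun i => by simp, by simp, fun z _ hz => ?_⟩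
    ext i
    exact hz i (by simp [hy0 i])
  | succ m ih =>
    intro y hy
    by_cases hinj : ∀ z, f z = 0 → (∀ i, y i = 0 → z i = 0) → z = 0
    · refine ⟨fun _ => 1, fun i => ⟨by norm_num, one_le_pow₀ (by norm_num)⟩, by simp, ?_⟩
      simpa using hinj
    push Not at hinj
    obtain ⟨z, hfz, hzy, hz⟩ := hinj
    obtain ⟨i₁, hi₁⟩ : ∃ i, z i ≠ 0 := by
      by_contra h
      push Not at h
      exact hz (funext h)
    obtain ⟨i, -, hmax⟩ := Finset.exists_max_image Finset.univ (fun i => |z i / y i|)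
      ⟨i₁, Finset.mem_univ _⟩
    have hpos : 0 < |z i / y i| := by
      refine lt_of_lt_of_le ?_ (hmax i₁ (Finset.mem_univ _))
      exact abs_pos.mpr (div_ne_zero hi₁ fun h => hi₁ (hzy _ h))
    have hq : z i / y i ≠ 0 := abs_pos.mp hpos
    set b : C → ℝ := fun j => 1 - (z j / y j) / (z i / y i) with hb
    have hbb : ∀ j, 0 ≤ b j ∧ b j ≤ 2 := by
      intro j
      have h1 : |(z j / y j) / (z i / y i)| ≤ 1 := by
        rw [abs_div]
        exact div_le_one_of_le₀ (hmax j (Finset.mem_univ _)) (abs_nonneg _)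
      rw [abs_le] at h1
      exact ⟨by simp only [hb]; linarith [h1.2], by simp only [hb]; linarith [h1.1]⟩
    have hby : (fun j => b j * y j) = y - (z i / y i)⁻¹ • z := by
      ext j
      by_cases hj : y j = 0
      · simp [hj, hzy j hj]
      · simp only [hb, Pi.sub_apply, Pi.smul_apply, smul_eq_mul]
        have : (z j / y j) * y j = z j := div_mul_cancel₀ _ hj
        rw [sub_mul, one_mul, div_eq_mul_inv, mul_right_comm, this, mul_comm]
    have hcard : (Finset.univ.filter fun j => b j * y j ≠ 0).card ≤ m := by
      have : (Finset.univ.filter fun j => b j * y j ≠ 0) ⊂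
          (Finset.univ.filter fun j => y j ≠ 0) := by
        refine (Finset.ssubset_iff_of_subset ?_).mpr ⟨i, ?_, ?_⟩
        · intro j
          simp only [Finset.mem_filter, Finset.mem_univ, true_and]
          exact fun h h' => h (by simp [h'])
        · simp only [Finset.mem_filter, Finset.mem_univ, true_and]
          exact fun h => hq (by simp [h])
        · simp [hb, div_self hq]
      have := Finset.card_lt_card this
      omega
    obtain ⟨a, ha, hfa, hainj⟩ := ih _ hcard
    refine ⟨fun j => a j * b j, fun j => ⟨mul_nonneg (ha j).1 (hbb j).1, ?_⟩, ?_, ?_⟩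
    · rw [pow_succ]
      exact mul_le_mul (ha j).2 (hbb j).2 (hbb j).1 (by positivity)
    · simp only [mul_assoc]
      rw [hfa, hby, map_sub, map_smul, hfz]
      simp
    · simpa only [mul_assoc] using hainj

/-- If the real kernel vectors of an integer matrix with support in `β` and zero `j`-th entry
are trivial, then the kernel vectors supported on `β` are multiples of one integral vector.
The integral vector is chosen before the kernel vector `y`. -/
theorem exists_integral_generator {R C : Type*} [Fintype C]
    (M : Matrix R C ℤ) (β : Set C) (j : C) :
    ∃ v : C → ℤ, ∀ y : C → ℝ, (∀ p, ∑ c, (M p c : ℝ) * y c = 0) → y j ≠ 0 →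
      (∀ c, c ∉ β → y c = 0) →
      (∀ z : C → ℝ, (∀ p, ∑ c, (M p c : ℝ) * z c = 0) → z j = 0 →
        (∀ c, c ∉ β → z c = 0) → z = 0) →
      0 < v j ∧ (∀ p, ∑ c, M p c * v c = 0) ∧ ∀ c, y c = (y j / v j) * v c := by
  classical
  by_cases hex : ∃ y : C → ℝ, (∀ p, ∑ c, (M p c : ℝ) * y c = 0) ∧ y j ≠ 0 ∧
      (∀ c, c ∉ β → y c = 0)
  swap
  · exact ⟨0, fun y h1 h2 h3 => (hex ⟨y, h1, h2, h3⟩).elim⟩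
  obtain ⟨y₀, h1, h2, h3⟩ := hex
  -- A ℚ-linear retraction of ℝ onto ℚ turns the real solution into a rational one.
  obtain ⟨φ, hφ⟩ := LinearMap.exists_leftInverse_of_injective (Algebra.linearMap ℚ ℝ)
    (LinearMap.ker_eq_bot.mpr (algebraMap ℚ ℝ).injective)
  have hφ1 : φ 1 = 1 := by
    have := LinearMap.congr_fun hφ 1
    simpa using this
  set q : C → ℚ := fun c => φ (y₀ c / y₀ j) with hqdef
  have hqj : q j = 1 := by simp [hqdef, div_self h2, hφ1]
  have hqker : ∀ p, ∑ c, (M p c : ℚ) * q c = 0 := by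
    intro p
    have h : ∑ c, (M p c) • (y₀ c / y₀ j) = 0 := by
      have := congrArg (· / y₀ j) (h1 p)
      simpa [Finset.sum_div, mul_div_assoc] using this
    have := congrArg φ h
    rw [map_sum, map_zero] at this
    rw [← this]
    refine Finset.sum_congr rfl fun c _ => ?_
    rw [map_zsmul, zsmul_eq_mul]
  set D : ℤ := ∏ c, ((q c).den : ℤ) with hD
  have hDpos : 0 < D := Finset.prod_pos fun c _ => by exact_mod_cast (q c).pos
  have hint : ∀ c, ∃ v : ℤ, (v : ℚ) = D * q c := by
    intro c
    obtain ⟨k, hk⟩ : ((q c).den : ℤ) ∣ D := Finset.dvd_prod_of_mem _ (Finset.mem_univ c)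
    refine ⟨k * (q c).num, ?_⟩
    have := Rat.mul_den_eq_num (q c)
    rw [hk]
    push_cast
    rw [← this]
    ring
  choose v hv using hint
  have hvj : v j = D := by
    have := hv j
    rw [hqj, mul_one] at this
    exact_mod_cast this
  have hvker : ∀ p, ∑ c, M p c * v c = 0 := by
    intro p
    have : ((∑ c, M p c * v c : ℤ) : ℚ) = 0 := by
      push_cast
      simp_rw [hv, mul_left_comm _ (D : ℚ)]
      rw [← Finset.mul_sum, hqker, mul_zero]
    exact_mod_cast this
  have hv0 : ∀ c, c ∉ β → v c = 0 := by
    intro c hc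
    have : (v c : ℚ) = 0 := by rw [hv, hqdef]; simp [h3 c hc]
    exact_mod_cast this
  refine ⟨v, fun y hy hyj hyβ hinj => ⟨hvj ▸ hDpos, hvker, fun c => ?_⟩⟩
  have hvjR : (v j : ℝ) ≠ 0 := by rw [hvj]; exact_mod_cast hDpos.ne'
  have := hinj (fun c => y c - (y j / v j) * v c) ?_ ?_ ?_
  · have := congrFun this c
    simp only [Pi.zero_apply] at this
    linarith
  · intro p
    have hp : ∑ c, (M p c : ℝ) * v c = 0 := by exact_mod_cast hvker p
    simp_rw [mul_sub, mul_left_comm _ (y j / v j)]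
    rw [Finset.sum_sub_distrib, ← Finset.mul_sum, hp, hy, mul_zero, sub_zero]
  · rw [div_mul_cancel₀ _ hvjR, sub_self]
  · intro c hc
    simp [hyβ c hc, hv0 c hc]

/-- A real kernel vector `w` of `M` with a large entry at `j` dominates, conformally and with factor
`K`, an integral kernel vector `u` that is bounded in terms of `M` and `K` and nonzero at `j`. The
domination is recorded by the ratios `a = u / w`. -/
theorem exists_integral_direction {R C : Type*} [Fintype C] (M : Matrix R C ℤ) (K : ℕ) :
    ∃ N : ℕ, ∀ w : C → ℝ, (∀ p, ∑ c, (M p c : ℝ) * w c = 0) → ∀ j, (N : ℝ) < |w j| →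
      ∃ (u : C → ℤ) (a : C → ℝ), (∀ p, ∑ c, M p c * u c = 0) ∧ u j ≠ 0 ∧
        (∀ c, |(u c : ℝ)| ≤ N) ∧ ∀ c, (u c : ℝ) = a c * w c ∧ 0 ≤ a c ∧ K * a c ≤ 1 := by
  classical
  choose v hv using fun p : Finset C × C => exists_integral_generator M (p.1 : Set C) p.2
  set L : ℕ := ∑ p, ∑ c, (v p c).natAbs with hL
  have hvL : ∀ p c, |(v p c : ℝ)| ≤ L := by
    intro p c
    have h : (v p c).natAbs ≤ L :=
      (Finset.single_le_sum (f := fun c => (v p c).natAbs) (fun _ _ => Nat.zero_le _)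
        (Finset.mem_univ c)).trans
      (Finset.single_le_sum (f := fun p => ∑ c, (v p c).natAbs) (fun _ _ => Nat.zero_le _)
        (Finset.mem_univ p))
    rw [← Int.cast_abs, Int.abs_eq_natAbs]
    exact_mod_cast h
  -- `y j ≥ K * 2 ^ |C| * v j` makes `K * v` smaller than `w`.
  refine ⟨(K + 1) * 2 ^ Fintype.card C * L, fun w hw j hj => ?_⟩
  set f : (C → ℝ) →ₗ[ℝ] (R → ℝ) × ℝ :=
    LinearMap.prod (Matrix.mulVecLin (M.map (Int.cast : ℤ → ℝ))) (LinearMap.proj j) with hf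
  have hf0 : ∀ z, (f z).1 = fun p => ∑ c, (M p c : ℝ) * z c := by
    intro z
    ext p
    simp [hf, Matrix.mulVec, dotProduct]
  have hf1 : ∀ z, (f z).2 = z j := by
    intro z
    simp [hf]
  obtain ⟨a, ha, hfa, hinj⟩ := exists_basic f w
  set y : C → ℝ := fun c => a c * w c with hy
  have hyker : ∀ p, ∑ c, (M p c : ℝ) * y c = 0 := by
    intro p
    have h := congrArg Prod.fst hfa
    rw [hf0, hf0] at h
    rw [congrFun h p, hw]
  have hyj : y j = w j := by
    have h := congrArg Prod.snd hfa
    rwa [hf1, hf1] at h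
  have hwj : y j ≠ 0 := by
    rw [hyj]
    exact abs_pos.mp (lt_of_le_of_lt (Nat.cast_nonneg _) hj)
  obtain ⟨hvj, hvker, hyv⟩ := hv (Finset.univ.filter fun c => y c ≠ 0, j) y hyker hwj
    (by intro c; simp) (by
      intro z hz hzj hzβ
      refine hinj z (Prod.ext ?_ ?_) ?_
      · rw [hf0]; ext p; exact hz p
      · rw [hf1]; exact hzj
      · intro c hc
        have hc' : y c = 0 := hc
        exact hzβ c (by simp [hc']))
  have hvb := hvL (Finset.univ.filter fun c => y c ≠ 0, j)
  generalize v (Finset.univ.filter fun c => y c ≠ 0, j) = v₀ at hvj hvker hyv hvb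
  simp only at hvj
  have hvjR : (0 : ℝ) < v₀ j := by exact_mod_cast hvj
  have hpow : (1 : ℝ) ≤ 2 ^ Fintype.card C := one_le_pow₀ (by norm_num)
  have hlarge : (K + 1) * 2 ^ Fintype.card C * (v₀ j : ℝ) ≤ |y j| := by
    rw [hyj]
    refine le_trans ?_ hj.le
    push_cast
    gcongr
    exact (le_abs_self _).trans (hvb j)
  obtain ⟨e, he, hee⟩ : ∃ e : ℤ, |(e : ℝ)| = 1 ∧ |y j| = e * y j := by
    rcases abs_choice (y j) with h | h
    · exact ⟨1, by simp, by simp [h]⟩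
    · exact ⟨-1, by simp, by simp [h]⟩
  have hypos : 0 < |y j| := abs_pos.mpr hwj
  have hesq : (e : ℝ) * e = 1 := by rw [← abs_mul_abs_self, he, one_mul]
  have hcoef : (e : ℝ) = (v₀ j / |y j|) * (y j / v₀ j) := by
    have : y j = e * |y j| := by rw [hee, ← mul_assoc, hesq, one_mul]
    field_simp
    linarith
  refine ⟨fun c => e * v₀ c, fun c => v₀ j / |y j| * a c, ?_, ?_, ?_, ?_⟩
  · intro p
    simp_rw [mul_left_comm _ e]
    rw [← Finset.mul_sum, hvker, mul_zero]
  · refine mul_ne_zero ?_ hvj.ne'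
    rintro rfl
    simp at he
  · intro c
    push_cast
    rw [abs_mul, he, one_mul]
    refine (hvb c).trans ?_
    have : (1 : ℝ) ≤ (K + 1) * 2 ^ Fintype.card C :=
      one_le_mul_of_one_le_of_one_le (by linarith [Nat.cast_nonneg (α := ℝ) K]) hpow
    exact le_mul_of_one_le_left (Nat.cast_nonneg _) this
  · intro c
    refine ⟨?_, mul_nonneg (by positivity) (ha c).1, ?_⟩
    · push_cast
      rw [mul_assoc]
      change _ = _ * y c
      rw [hyv c, ← mul_assoc, ← hcoef]
    · have h1 : v₀ j / |y j| * a c ≤ v₀ j / |y j| * 2 ^ Fintype.card C := by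
        gcongr
        exact (ha c).2
      have h2 : K * (v₀ j / |y j| * 2 ^ Fintype.card C) ≤ 1 := by
        have : K * (v₀ j / |y j| * 2 ^ Fintype.card C) =
            (K * 2 ^ Fintype.card C * v₀ j) / |y j| := by ring
        rw [this]
        refine div_le_one_of_le₀ (le_trans ?_ hlarge) hypos.le
        gcongr
        linarith
      exact le_trans (mul_le_mul_of_nonneg_left h1 (Nat.cast_nonneg _)) h2

/-- `exists_integral_direction`, uniformly over a finite family of matrices. -/
theorem exists_integral_direction_family {Q R C : Type*} [Fintype C] [Fintype Q]
    (M : Q → Matrix R C ℤ) (K : ℕ) :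
    ∃ N : ℕ, ∀ (q : Q) (w : C → ℝ), (∀ p, ∑ c, (M q p c : ℝ) * w c = 0) →
      ∀ j, (N : ℝ) < |w j| →
      ∃ (u : C → ℤ) (a : C → ℝ), (∀ p, ∑ c, M q p c * u c = 0) ∧ u j ≠ 0 ∧
        (∀ c, |(u c : ℝ)| ≤ N) ∧ ∀ c, (u c : ℝ) = a c * w c ∧ 0 ≤ a c ∧ K * a c ≤ 1 := by
  choose N hN using fun q => exists_integral_direction (M q) K
  have hle : ∀ q, (N q : ℝ) ≤ (∑ q, N q : ℕ) := fun q => by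
    exact_mod_cast Finset.single_le_sum (f := N) (fun _ _ => Nat.zero_le _) (Finset.mem_univ q)
  refine ⟨∑ q, N q, fun q w hw j hj => ?_⟩
  obtain ⟨u, a, h1, h2, h3, h4⟩ := hN q w hw j ((hle q).trans_lt hj)
  exact ⟨u, a, h1, h2, fun c => (h3 c).trans (hle q), h4⟩

/-! ### Merging blocks -/

theorem conformalTo_of_ratio {C : Type*} {u w a : C → ℝ}
    (h : ∀ c, u c = a c * w c ∧ 0 ≤ a c ∧ a c ≤ 1) : ConformalTo u w := by
  intro c
  obtain ⟨h1, h2, h3⟩ := h c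
  rw [h1]
  refine ⟨?_, ?_⟩
  · rw [abs_mul, abs_of_nonneg h2]
    exact mul_le_of_le_one_left (abs_nonneg _) h3
  · rw [mul_assoc]
    exact mul_nonneg h2 (mul_self_nonneg _)

/-- A block `(A B)` of a 2-stage matrix with entries bounded by `Δ`; a finite type. -/
abbrev BlockType (r s t Δ : ℕ) : Type :=
  Fin t → (Fin r ⊕ Fin s) → Finset.Icc (-(Δ : ℤ)) (Δ : ℤ)

/-- The 2-stage matrix whose blocks are indexed by all pairs (block, set of local columns).
The rows of the pairs outside `S` are replaced by zero. -/
def mergedMatrix (r s t Δ : ℕ) (S : Finset (BlockType r s t Δ × Finset (Fin s))) :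
    Matrix ((BlockType r s t Δ × Finset (Fin s)) × Fin t)
      (Fin r ⊕ (BlockType r s t Δ × Finset (Fin s)) × Fin s) ℤ :=
  fun p c => if p.1 ∈ S then
    Sum.elim (fun j => (p.1.1 p.2 (Sum.inl j) : ℤ))
      (fun d => if d.1 = p.1 then (p.1.1 p.2 (Sum.inr d.2) : ℤ) else 0) c else 0

/-- A kernel vector of a 2-stage matrix, given block by block, with a large global coordinate has a
bounded integral kernel vector conformal to it, nonzero on the global columns. -/
theorem exists_bounded_of_global_large (r s t Δ : ℕ) :
    ∃ N : ℕ, ∀ (n : ℕ) (D : Fin n → BlockType r s t Δ) (x : Fin r → ℝ) (y : Fin n → Fin s → ℝ),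
      (∀ i k, ∑ j, ((D i k (Sum.inl j) : ℤ) : ℝ) * x j +
        ∑ l, ((D i k (Sum.inr l) : ℤ) : ℝ) * y i l = 0) →
      ∀ j₀, (N : ℝ) < |x j₀| →
      ∃ (u : Fin r → ℤ) (v : Fin n → Fin s → ℤ),
        (∀ i k, ∑ j, (D i k (Sum.inl j) : ℤ) * u j +
          ∑ l, (D i k (Sum.inr l) : ℤ) * v i l = 0) ∧ u j₀ ≠ 0 ∧
        (∀ j, |(u j : ℝ)| ≤ N) ∧ (∀ i l, |(v i l : ℝ)| ≤ N) ∧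
        (∃ a : Fin r → ℝ, ∀ j, (u j : ℝ) = a j * x j ∧ 0 ≤ a j ∧ a j ≤ 1) ∧
        (∀ i, ∃ a : Fin s → ℝ, ∀ l, (v i l : ℝ) = a l * y i l ∧ 0 ≤ a l ∧ a l ≤ 1) := by
  classical
  obtain ⟨N, hN⟩ := exists_integral_direction_family (mergedMatrix r s t Δ) (2 ^ s)
  refine ⟨N, fun n D x y hker j₀ hj₀ => ?_⟩
  set F : BlockType r s t Δ → (Fin s → ℝ) →ₗ[ℝ] (Fin t → ℝ) := fun T =>
    Matrix.mulVecLin (Matrix.of fun k l => ((T k (Sum.inr l) : ℤ) : ℝ)) with hF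
  have hFapp : ∀ T z k, F T z k = ∑ l, ((T k (Sum.inr l) : ℤ) : ℝ) * z l := by
    intro T z k
    simp [hF, Matrix.mulVec, dotProduct]
  choose a ha hfa hinj using fun i => exists_basic (F (D i)) (y i)
  set y' : Fin n → Fin s → ℝ := fun i l => a i l * y i l with hy'
  have hfa' : ∀ i, F (D i) (y' i) = F (D i) (y i) := hfa
  have hFy : ∀ i k, F (D i) (y' i) k = -∑ j, ((D i k (Sum.inl j) : ℤ) : ℝ) * x j := by
    intro i k
    rw [hfa', hFapp]
    linarith [hker i k]
  set τ : Fin n → BlockType r s t Δ × Finset (Fin s) := fun i =>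
    (D i, Finset.univ.filter fun l => y' i l ≠ 0) with hτ
  have huniq : ∀ i i', τ i = τ i' → y' i = y' i' := by
    intro i i' h
    have hD : D i = D i' := congrArg Prod.fst h
    have hβ : (Finset.univ.filter fun l => y' i l ≠ 0) =
      Finset.univ.filter fun l => y' i' l ≠ 0 := congrArg Prod.snd h
    have := hinj i (y' i - y' i') ?_ ?_
    · exact sub_eq_zero.mp this
    · rw [map_sub, sub_eq_zero]
      ext k
      rw [hFy, hD, hFy]
    · intro l hl
      have hl0 : y' i l = 0 := hl
      have : l ∉ Finset.univ.filter fun l => y' i' l ≠ 0 := by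
        rw [← hβ]
        simpa using hl0
      have hl' : y' i' l = 0 := by simpa using this
      simp [hl0, hl']
  set Y : BlockType r s t Δ × Finset (Fin s) → Fin s → ℝ := fun σ =>
    if h : ∃ i, τ i = σ then y' h.choose else 0 with hYdef
  have hY : ∀ i, Y (τ i) = y' i := by
    intro i
    have h : ∃ i', τ i' = τ i := ⟨i, rfl⟩
    simp only [hYdef, dif_pos h]
    exact huniq _ _ h.choose_spec
  have hsplit : ∀ (σ : BlockType r s t Δ × Finset (Fin s)) (k : Fin t)
      (w : Fin r ⊕ (BlockType r s t Δ × Finset (Fin s)) × Fin s → ℝ),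
      σ ∈ Finset.univ.image τ →
      ∑ c, (mergedMatrix r s t Δ (Finset.univ.image τ) (σ, k) c : ℝ) * w c =
      ∑ j, ((σ.1 k (Sum.inl j) : ℤ) : ℝ) * w (Sum.inl j) +
        ∑ l, ((σ.1 k (Sum.inr l) : ℤ) : ℝ) * w (Sum.inr (σ, l)) := by
    intro σ k w hσ
    rw [Fintype.sum_sum_type]
    congr 1
    · refine Finset.sum_congr rfl fun j _ => ?_
      simp only [mergedMatrix, if_pos hσ, Sum.elim_inl]
    · rw [Fintype.sum_prod_type, Finset.sum_eq_single σ]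
      · refine Finset.sum_congr rfl fun l _ => ?_
        simp only [mergedMatrix, if_pos hσ, Sum.elim_inr, if_true]
      · intro σ' _ hne
        refine Finset.sum_eq_zero fun l _ => ?_
        simp only [mergedMatrix, if_pos hσ, Sum.elim_inr, if_neg hne, Int.cast_zero, zero_mul]
      · simp
  obtain ⟨u, b, hu, huj, hub, hurat⟩ := hN (Finset.univ.image τ)
    (Sum.elim x fun d => Y d.1 d.2) (by
      rintro ⟨σ, k⟩
      by_cases hσ : σ ∈ Finset.univ.image τ
      · rw [hsplit σ k _ hσ]
        obtain ⟨i, -, rfl⟩ := Finset.mem_image.mp hσ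
        simp only [Sum.elim_inl, Sum.elim_inr, hY]
        rw [← hFapp, hFy]
        simp [hτ]
      · refine Finset.sum_eq_zero fun c _ => ?_
        simp only [mergedMatrix, if_neg hσ, Int.cast_zero, zero_mul]) (Sum.inl j₀) hj₀
  have h2s : (1 : ℝ) ≤ 2 ^ s := one_le_pow₀ (by norm_num)
  refine ⟨fun j => u (Sum.inl j), fun i l => u (Sum.inr (τ i, l)), ?_, huj,
    fun j => hub _, fun i l => hub _, ⟨fun j => b (Sum.inl j), fun j => ?_⟩,
    fun i => ⟨fun l => b (Sum.inr (τ i, l)) * a i l, fun l => ?_⟩⟩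
  · intro i k
    have h := hsplit (τ i) k (fun c => u c) (Finset.mem_image_of_mem _ (Finset.mem_univ i))
    have h0 := hu (τ i, k)
    have h0' : ∑ c, (mergedMatrix r s t Δ (Finset.univ.image τ) (τ i, k) c : ℝ) * u c = 0 := by
      exact_mod_cast h0
    rw [h0'] at h
    exact_mod_cast h.symm
  · obtain ⟨h1, h2, h3⟩ := hurat (Sum.inl j)
    refine ⟨h1, h2, le_trans ?_ h3⟩
    push_cast
    exact le_mul_of_one_le_left h2 h2s
  · obtain ⟨h1, h2, h3⟩ := hurat (Sum.inr (τ i, l))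
    refine ⟨?_, mul_nonneg h2 (ha i l).1, ?_⟩
    · rw [h1]
      simp only [Sum.elim_inr, hY, hy']
      ring
    · have h4 := (ha i l).2
      rw [Fintype.card_fin] at h4
      push_cast at h3
      calc _ ≤ b (Sum.inr (τ i, l)) * 2 ^ s := mul_le_mul_of_nonneg_left h4 h2
        _ ≤ 1 := by linarith

/-- The kernel equations of a 2-stage matrix, block by block. -/
theorem sum_twoStage {A : Type*} [CommRing A] {n r s t : ℕ}
    {E : Matrix (Fin n × Fin t) (Fin r ⊕ Fin n × Fin s) ℤ}
    (hE : ∀ (i : Fin n) (k : Fin t) (j : Fin n) (l : Fin s),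
      j ≠ i → E (i, k) (Sum.inr (j, l)) = 0)
    (w : Fin r ⊕ Fin n × Fin s → A) (i : Fin n) (k : Fin t) :
    ∑ c, (E (i, k) c : A) * w c = ∑ j, (E (i, k) (Sum.inl j) : A) * w (Sum.inl j) +
      ∑ l, (E (i, k) (Sum.inr (i, l)) : A) * w (Sum.inr (i, l)) := by
  rw [Fintype.sum_sum_type]
  congr 1
  rw [Fintype.sum_prod_type, Finset.sum_eq_single i]
  · intro i' _ hne
    refine Finset.sum_eq_zero fun l _ => ?_
    rw [hE i k i' l hne, Int.cast_zero, zero_mul]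
  · simp

/-- Kernel vectors of a 2-stage matrix that have no integral nonzero conformal kernel vector other
than themselves are bounded, independently of the number of blocks. -/
theorem exists_bound_of_minimal (r s t Δ : ℕ) :
    ∃ N : ℕ, ∀ (n : ℕ) (E : Matrix (Fin n × Fin t) (Fin r ⊕ Fin n × Fin s) ℤ),
      (∀ (i : Fin n) (k : Fin t) (j : Fin n) (l : Fin s),
          j ≠ i → E (i, k) (Sum.inr (j, l)) = 0) →
      (∀ p c, |E p c| ≤ Δ) →
      ∀ g : Fin r ⊕ Fin n × Fin s → ℝ, (∀ p, ∑ c, (E p c : ℝ) * g c = 0) →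
      (∀ v : Fin r ⊕ Fin n × Fin s → ℤ, (∀ p, ∑ c, E p c * v c = 0) → v ≠ 0 →
        ConformalTo (fun c => (v c : ℝ)) g → ∀ c, (v c : ℝ) = g c) →
      ∀ c, |g c| ≤ N := by
  classical
  obtain ⟨N₁, hN₁⟩ := exists_bounded_of_global_large r s t Δ
  obtain ⟨N₂, hN₂⟩ := exists_integral_direction_family
    (fun (T : BlockType r s t Δ) (k : Fin t) (c : Fin r ⊕ Fin s) => (T k c : ℤ)) (N₁ + 1)
  refine ⟨N₁ + N₂, fun n E hE hΔ g hg hmin => ?_⟩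
  set D : Fin n → BlockType r s t Δ := fun i k c =>
    ⟨E (i, k) (Sum.elim Sum.inl (fun l => Sum.inr (i, l)) c),
      Finset.mem_Icc.mpr (abs_le.mp (hΔ _ _))⟩ with hD
  have hgblock : ∀ i k, ∑ j, ((D i k (Sum.inl j) : ℤ) : ℝ) * g (Sum.inl j) +
      ∑ l, ((D i k (Sum.inr l) : ℤ) : ℝ) * g (Sum.inr (i, l)) = 0 := by
    intro i k
    rw [← hg (i, k), sum_twoStage hE]
    rfl
  by_cases hx : ∃ j₀, (N₁ : ℝ) < |g (Sum.inl j₀)|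
  · obtain ⟨j₀, hj₀⟩ := hx
    obtain ⟨u, v, hker, hu0, hub, hvb, ⟨a, ha⟩, hb⟩ := hN₁ n D (fun j => g (Sum.inl j))
      (fun i l => g (Sum.inr (i, l))) hgblock j₀ hj₀
    choose b hb using hb
    have heq := hmin (Sum.elim u fun d => v d.1 d.2) ?_ ?_ ?_
    · intro c
      rw [← heq c]
      refine le_trans (?_ : _ ≤ (N₁ : ℝ)) (by push_cast; linarith [Nat.cast_nonneg (α := ℝ) N₂])
      rcases c with j | ⟨i, l⟩
      · exact hub j
      · exact hvb i l
    · rintro ⟨i, k⟩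
      rw [← hker i k]
      exact sum_twoStage hE _ i k
    · intro h
      exact hu0 (congrFun h (Sum.inl j₀))
    · refine conformalTo_of_ratio (a := Sum.elim a fun d => b d.1 d.2) ?_
      rintro (j | ⟨i, l⟩)
      · exact ha j
      · exact hb i l
  push Not at hx
  by_cases hy : ∃ i l, (N₂ : ℝ) < |g (Sum.inr (i, l))|
  · obtain ⟨i, l₀, hl₀⟩ := hy
    obtain ⟨u, a, hker, hu0, hub, ha⟩ := hN₂ (D i)
      (Sum.elim (fun j => g (Sum.inl j)) fun l => g (Sum.inr (i, l)))
      (by intro k; rw [Fintype.sum_sum_type]; exact hgblock i k) (Sum.inr l₀) hl₀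
    -- The global part of `u` has absolute value at most `N₁ / (N₁ + 1) < 1`, so it vanishes.
    have hux : ∀ j, u (Sum.inl j) = 0 := by
      intro j
      obtain ⟨h1, h2, h3⟩ := ha (Sum.inl j)
      simp only [Sum.elim_inl] at h1
      push_cast at h3
      have hN : (0 : ℝ) ≤ N₁ := Nat.cast_nonneg _
      have h4 : |(u (Sum.inl j) : ℝ)| < 1 := by
        rw [h1, abs_mul, abs_of_nonneg h2]
        have h5 := mul_le_mul_of_nonneg_left (hx j) h2
        by_cases h0 : a (Sum.inl j) = 0
        · simp [h0]
        · have : 0 < a (Sum.inl j) := lt_of_le_of_ne h2 (Ne.symm h0)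
          linarith
      exact Int.abs_lt_one_iff.mp (by exact_mod_cast h4)
    have ha1 : ∀ c, a c ≤ 1 := by
      intro c
      obtain ⟨-, h2, h3⟩ := ha c
      push_cast at h3
      have := mul_nonneg (Nat.cast_nonneg (α := ℝ) N₁) h2
      linarith
    have heq := hmin (Sum.elim (fun _ => 0) fun d => if d.1 = i then u (Sum.inr d.2) else 0)
      ?_ ?_ ?_
    · intro c
      rw [← heq c]
      have hN : (0 : ℝ) ≤ N₁ := Nat.cast_nonneg _
      refine le_trans (?_ : _ ≤ (N₂ : ℝ)) (by push_cast; linarith)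
      rcases c with j | ⟨i', l⟩
      · simp
      · by_cases h : i' = i
        · simpa [h] using hub (Sum.inr l)
        · simp [h]
    · rintro ⟨i', k⟩
      have h := sum_twoStage hE
        (Sum.elim (fun _ => 0) fun d => if d.1 = i then u (Sum.inr d.2) else 0 :
          Fin r ⊕ Fin n × Fin s → ℤ) i' k
      simp only [Int.cast_id] at h
      rw [h]
      by_cases hi : i' = i
      · subst hi
        have := hker k
        rw [Fintype.sum_sum_type] at this
        simp only [hux, mul_zero, Finset.sum_const_zero, zero_add] at this
        simpa [hD] using this
      · simp [hi]
    · intro h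
      have := congrFun h (Sum.inr (i, l₀))
      simp at this
      exact hu0 this
    · refine conformalTo_of_ratio
        (a := Sum.elim (fun _ => 0) fun d => if d.1 = i then a (Sum.inr d.2) else 0) ?_
      rintro (j | ⟨i', l⟩)
      · simp
      · by_cases h : i' = i
        · subst h
          simpa using ⟨(ha (Sum.inr l)).1, (ha (Sum.inr l)).2.1, ha1 (Sum.inr l)⟩
        · simp [h]
  push Not at hy
  have h1 : (0 : ℝ) ≤ N₁ := Nat.cast_nonneg _
  have h2 : (0 : ℝ) ≤ N₂ := Nat.cast_nonneg _
  rintro (j | ⟨i, l⟩)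
  · push_cast
    linarith [hx j]
  · push_cast
    linarith [hy i l]

/-! ### Minimality of mixed Graver elements -/

/-- A circuit is the only nonzero integral kernel vector conformal to it. -/
theorem circuit_minimal_s7 {R C : Type*} [Fintype C] {A : Matrix R C ℤ} {g : C → ℤ}
    (hg : IsCircuit A g) {v : C → ℤ} (hv : A.mulVec v = 0) (hv0 : v ≠ 0)
    (hc : ∀ i, |v i| ≤ |g i| ∧ 0 ≤ v i * g i) : v = g := by
  classical
  obtain ⟨-, hker, hgcd, hsupp⟩ := hg
  have hvan : ∀ i, g i = 0 → v i = 0 := by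
    intro i hi
    have := (hc i).1
    rw [hi, abs_zero] at this
    exact abs_nonpos_iff.mp this
  -- `g i • v - v i • g` has smaller support than `g`.
  have hprop : ∀ i, g i ≠ 0 → ∀ j, g i * v j = v i * g j := by
    intro i hi
    by_contra hne
    push Not at hne
    obtain ⟨j, hj⟩ := hne
    set z : C → ℤ := g i • v - v i • g with hz
    have hzker : A.mulVec z = 0 := by
      rw [hz, Matrix.mulVec_sub, Matrix.mulVec_smul, Matrix.mulVec_smul, hv, hker]
      simp
    refine hsupp (fun c => (z c : ℝ)) ?_ ?_ ?_
    · intro h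
      have := congrFun h j
      simp only [Pi.zero_apply, Int.cast_eq_zero, hz, Pi.sub_apply, Pi.smul_apply,
        smul_eq_mul] at this
      exact hj (by linarith)
    · ext p
      have := congrFun hzker p
      simp only [Matrix.mulVec, dotProduct, Pi.zero_apply, Matrix.map_apply] at this ⊢
      exact_mod_cast this
    · refine (Set.ssubset_iff_of_subset ?_).mpr ⟨i, ?_, ?_⟩
      · intro c hc' hgc
        have hgc' : g c = 0 := Int.cast_eq_zero.mp (show (g c : ℝ) = 0 from hgc)
        exact hc' (by simp [hz, hgc', hvan c hgc'])
      · simpa using hi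
      · simp [hz, mul_comm]
  ext i
  by_cases hi : g i = 0
  · rw [hi, hvan i hi]
  have hvi : v i ≠ 0 := by
    intro h
    refine hv0 (funext fun j => ?_)
    have := hprop i hi j
    rw [h, zero_mul] at this
    exact (mul_eq_zero.mp this).resolve_left hi
  have hdvd : (g i).natAbs ∣ (v i).natAbs := by
    have h : (g i).natAbs ∣ Finset.univ.gcd fun j => (v i).natAbs * (g j).natAbs := by
      refine Finset.dvd_gcd fun j _ => ?_
      rw [← Int.natAbs_mul, ← hprop i hi j, Int.natAbs_mul]
      exact dvd_mul_right _ _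
    rw [Finset.gcd_mul_left, hgcd] at h
    simpa using h
  have hle := Nat.le_of_dvd (Int.natAbs_pos.mpr hvi) hdvd
  have h1 := (hc i).1
  have h2 := (hc i).2
  have habs : |v i| = |g i| := by
    rw [Int.abs_eq_natAbs, Int.abs_eq_natAbs] at *
    omega
  rcases abs_eq_abs.mp habs with h | h
  · exact h
  · rw [h] at h2
    nlinarith [mul_self_pos.mpr hi]

/-- Mixed Graver basis elements are kernel vectors without a proper nonzero integral conformal
kernel vector. -/
theorem minimal_of_inMixedGraver {R C : Type*} [Fintype C] [DecidableEq C]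
    {E : Matrix R C ℤ} {I : Finset C} {g : C → ℝ} (hg : InMixedGraver E I g) :
    (∀ p, ∑ c, (E p c : ℝ) * g c = 0) ∧
    ∀ v : C → ℤ, (∀ p, ∑ c, E p c * v c = 0) → v ≠ 0 →
      ConformalTo (fun c => (v c : ℝ)) g → ∀ c, (v c : ℝ) = g c := by
  rcases hg with ⟨⟨hker, -⟩, -, hmin⟩ | ⟨hI, gz, hgz, hcirc⟩
  · refine ⟨fun p => by simpa [Matrix.mulVec, dotProduct] using congrFun hker p,
      fun v hv hv0 hc => ?_⟩
    by_contra hne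
    push Not at hne
    obtain ⟨c, hne⟩ := hne
    refine hmin (fun c => (v c : ℝ)) ⟨?_, fun i _ => ⟨v i, rfl⟩⟩ ?_ ?_ hc
    · ext p
      have := hv p
      simp only [Matrix.mulVec, dotProduct, Matrix.map_apply, Pi.zero_apply]
      exact_mod_cast this
    · intro h
      refine hv0 (funext fun c => ?_)
      have := congrFun h c
      simpa using this
    · intro h
      exact hne (congrFun h c)
  · -- Sums over all columns reduce to the columns outside `I` for vectors vanishing on `I`.
    have hsum : ∀ (w : C → ℝ), (∀ i ∈ I, w i = 0) → ∀ p, ∑ c, (E p c : ℝ) * w c =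
        ∑ c : {i : C // i ∉ I}, (E p c.1 : ℝ) * w c.1 := by
      intro w hw p
      rw [← Fintype.sum_subtype_add_sum_subtype (fun i : C => i ∉ I)]
      rw [add_eq_left]
      refine Finset.sum_eq_zero fun c _ => ?_
      rw [hw c.1 (not_not.mp c.2), mul_zero]
    refine ⟨fun p => ?_, fun v hv hv0 hc => ?_⟩
    · rw [hsum g hI p]
      have := congrFun hcirc.2.1 p
      simp only [Matrix.mulVec, dotProduct, Matrix.submatrix_apply, id, Pi.zero_apply] at this
      simp only [hgz]
      exact_mod_cast this
    · have hvI : ∀ i ∈ I, v i = 0 := by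
        intro i hi
        have := (hc i).1
        rw [hI i hi, abs_zero] at this
        exact Int.cast_eq_zero.mp (show (v i : ℝ) = 0 from abs_nonpos_iff.mp this)
      have heq := circuit_minimal_s7 hcirc (v := fun i => v i.1) ?_ ?_ ?_
      · intro c
        by_cases hcI : c ∈ I
        · rw [hvI c hcI, hI c hcI, Int.cast_zero]
        · rw [hgz ⟨c, hcI⟩, ← congrFun heq ⟨c, hcI⟩]
      · ext p
        have h1 : ∑ c, (E p c : ℝ) * (v c : ℝ) = 0 := by exact_mod_cast hv p
        rw [hsum (fun c => (v c : ℝ)) (fun i hi => by simp [hvI i hi])] at h1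
        simp only [Matrix.mulVec, dotProduct, Matrix.submatrix_apply, id, Pi.zero_apply]
        exact_mod_cast h1
      · intro h
        refine hv0 (funext fun c => ?_)
        by_cases hcI : c ∈ I
        · exact hvI c hcI
        · exact congrFun h ⟨c, hcI⟩
      · intro i
        have := hc i.1
        rw [hgz i] at this
        beta_reduce at this
        exact_mod_cast this

theorem abs_le_matNormInf {R C : Type*} [Fintype R] [Fintype C] (E : Matrix R C ℤ) (p : R) (c : C) :
    |E p c| ≤ (matNormInf E : ℤ) := by
  rw [Int.abs_eq_natAbs]
  exact_mod_cast Finset.le_sup (f := fun p : R × C => (E p.1 p.2).natAbs)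
    (Finset.mem_univ (p, c))

/-- the `∞`-norm of mixed Graver basis elements of a 2-stage stochastic
matrix is bounded by a function of the block dimensions `r, s, t` and `‖E‖∞` alone,
independently of the number `n` of blocks. -/
theorem twoStage_mixedGraver_norm_bound :
    ∃ h : ℕ → ℕ → ℕ → ℕ → ℕ,
      ∀ (n r s t : ℕ) (E : Matrix (Fin n × Fin t) (Fin r ⊕ Fin n × Fin s) ℤ),
        (∀ (i : Fin n) (k : Fin t) (j : Fin n) (l : Fin s),
          j ≠ i → E (i, k) (Sum.inr (j, l)) = 0) →
        ∀ (I : Finset (Fin r ⊕ Fin n × Fin s)) (g : Fin r ⊕ Fin n × Fin s → ℝ),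
          InMixedGraver E I g →
          ∀ c, |g c| ≤ (h r s t (matNormInf E) : ℝ) := by
  choose N hN using exists_bound_of_minimal
  refine ⟨N, fun n r s t E hE I g hg => ?_⟩
  obtain ⟨hker, hmin⟩ := minimal_of_inMixedGraver hg
  exact hN r s t (matNormInf E) n E hE (abs_le_matNormInf E) g hker hmin
end
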